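/- arXiv:1612.01983 — 3 statements merged into one kernel-verified Lean document; each statement's English description precedes it below -/
import Mathlib

section
/- The probability that f(3) = ∞ is either 0 or 1: P(f(3) = ∞) ∈ {0, 1}. -/
open MeasureTheory ProbabilityTheory

namespace FavWalk

def cons (a : ℤ) (x : ℕ → ℤ) : ℕ → ℤ
  | 0 => a
  | n + 1 => x n

def app : List ℤ → (ℕ → ℤ) → (ℕ → ℤ)
  | [], x => x
  | a :: w, x => cons a (app w x)

def W (x : ℕ → ℤ) (t : ℕ) : ℤ := ∑ i ∈ Finset.range t, x i

def loc (g : ℤ → ℕ) (s : ℤ) (x : ℕ → ℤ) (t : ℕ) (y : ℤ) : ℕ :=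
  g y + ∑ k ∈ Finset.range t, if s + W x (k + 1) = y then 1 else 0

def fav (g : ℤ → ℕ) (s : ℤ) (x : ℕ → ℤ) (t : ℕ) : Set ℤ :=
  {y | ∀ z, loc g s x t z ≤ loc g s x t y}

def Q (g : ℤ → ℕ) (s : ℤ) (x : ℕ → ℤ) (t : ℕ) : Prop :=
  s + W x t ∈ fav g s x t ∧ (fav g s x t).encard = 3

def A (g : ℤ → ℕ) (s : ℤ) : Set (ℕ → ℤ) := {x | ∃ᶠ t in Filter.atTop, Q g s x t}

def vis : ℤ → List ℤ → ℤ → ℕ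
  | _, [], _ => 0
  | s, a :: w, y => (if s + a = y then 1 else 0) + vis (s + a) w y

lemma W_cons (a : ℤ) (x : ℕ → ℤ) (t : ℕ) : W (cons a x) (t + 1) = a + W x t := by
  simp only [W, Finset.sum_range_succ', cons]
  ring_nf

lemma loc_cons (g : ℤ → ℕ) (s a : ℤ) (x : ℕ → ℤ) (t : ℕ) :
    loc g s (cons a x) (t + 1)
      = loc (fun y => g y + if s + a = y then 1 else 0) (s + a) x t := by
  funext y
  simp only [loc, Finset.sum_range_succ', W_cons]
  simp only [W, Finset.sum_range_zero, add_zero, add_assoc]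
  ring_nf

lemma Q_cons (g : ℤ → ℕ) (s a : ℤ) (x : ℕ → ℤ) (t : ℕ) :
    Q g s (cons a x) (t + 1)
      ↔ Q (fun y => g y + if s + a = y then 1 else 0) (s + a) x t := by
  simp only [Q, fav, loc_cons, W_cons, add_assoc]

lemma A_cons (g : ℤ → ℕ) (s a : ℤ) (x : ℕ → ℤ) :
    cons a x ∈ A g s ↔ x ∈ A (fun y => g y + if s + a = y then 1 else 0) (s + a) := by
  simp only [A, Set.mem_ofPred_eq]
  rw [← Filter.map_add_atTop_eq_nat 1, Filter.frequently_map]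
  simp only [Q_cons, Filter.map_add_atTop_eq_nat]

lemma A_app (w : List ℤ) : ∀ (g : ℤ → ℕ) (s : ℤ) (x : ℕ → ℤ),
    app w x ∈ A g s ↔ x ∈ A (fun y => g y + vis s w y) (s + w.sum) := by
  induction w with
  | nil => intro g s x; simp [app, vis]
  | cons a w ih =>
    intro g s x
    simp only [app, A_cons, ih, vis, List.sum_cons, add_assoc]

lemma swap (u v : List ℤ) (hu : u.sum = 0) (hv : v.sum = 0) (x : ℕ → ℤ) :
    app u (app v x) ∈ A 0 0 ↔ app v (app u x) ∈ A 0 0 := by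
  simp only [A_app, hu, hv, add_zero, Pi.zero_apply, zero_add]
  simp only [add_comm]

lemma measurable_cons (a : ℤ) : Measurable (cons a) := by
  refine measurable_pi_lambda _ fun n => ?_
  cases n with
  | zero => exact measurable_const
  | succ n => exact measurable_pi_apply n

lemma measurable_app (w : List ℤ) : Measurable (app w) := by
  induction w with
  | nil => exact measurable_id
  | cons a w ih => exact (measurable_cons a).comp ih

lemma measurable_W (t : ℕ) : Measurable (fun x : ℕ → ℤ => W x t) := by
  unfold W
  fun_prop

lemma meas_Q (g : ℤ → ℕ) (s : ℤ) (t : ℕ) : MeasurableSet {x | Q g s x t} := by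
  let r : (ℕ → ℤ) → (Fin t → ℤ) := fun x i => x i
  let e : (Fin t → ℤ) → (ℕ → ℤ) := fun y i => if h : i < t then y ⟨i, h⟩ else 0
  have hr : Measurable r := measurable_pi_lambda _ fun n => measurable_pi_apply _
  have hW : ∀ x k, k ≤ t → W (e (r x)) k = W x k := by
    intro x k hk
    refine Finset.sum_congr rfl fun i hi => ?_
    have : i < t := (Finset.mem_range.1 hi).trans_le hk
    simp [e, r, this]
  have hloc : ∀ x, loc g s (e (r x)) t = loc g s x t := by
    intro x
    funext y
    simp only [loc]
    congr 1
    refine Finset.sum_congr rfl fun i hi => ?_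
    rw [hW x (i + 1) (Finset.mem_range.1 hi)]
  have : {x | Q g s x t} = r ⁻¹' {y | Q g s (e y) t} := by
    ext x
    simp only [Q, fav, Set.mem_ofPred_eq, Set.mem_preimage, hloc, hW x t le_rfl]
  rw [this]
  exact hr (Set.to_countable _).measurableSet

lemma meas_A (g : ℤ → ℕ) (s : ℤ) : MeasurableSet (A g s) := by
  have : A g s = ⋂ N : ℕ, ⋃ t : ℕ, ⋃ _ : N ≤ t, {x | Q g s x t} := by
    ext x
    simp [A, Filter.frequently_atTop]
  rw [this]
  exact MeasurableSet.iInter fun N => MeasurableSet.iUnion fun t =>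
    MeasurableSet.iUnion fun _ => meas_Q g s t


open scoped ENNReal symmDiff

def tail (x : ℕ → ℤ) : ℕ → ℤ := fun n => x (n + 1)

lemma cons_tail (x : ℕ → ℤ) : cons (x 0) (tail x) = x := by
  funext n
  cases n <;> rfl

lemma tail_cons (a : ℤ) (x : ℕ → ℤ) : tail (cons a x) = x := rfl

lemma measurable_tail : Measurable tail :=
  measurable_pi_lambda _ fun _ => measurable_pi_apply _

/-- first `t` letters -/
def wd : ℕ → (ℕ → ℤ) → List ℤ
  | 0, _ => []
  | t + 1, x => x 0 :: wd t (tail x)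

def drp : ℕ → (ℕ → ℤ) → (ℕ → ℤ)
  | 0, x => x
  | t + 1, x => drp t (tail x)

lemma measurable_drp (t : ℕ) : Measurable (drp t) := by
  induction t with
  | zero => exact measurable_id
  | succ t ih => exact ih.comp measurable_tail

lemma wd_length (t : ℕ) : ∀ x, (wd t x).length = t := by
  induction t with
  | zero => intro x; rfl
  | succ t ih => intro x; simp [wd, ih]

lemma app_wd (t : ℕ) : ∀ x, app (wd t x) (drp t x) = x := by
  induction t with
  | zero => intro x; rfl
  | succ t ih => intro x; simp only [wd, app, drp, ih, cons_tail]

lemma wd_sum (t : ℕ) : ∀ x, (wd t x).sum = W x t := by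
  induction t with
  | zero => intro x; rfl
  | succ t ih =>
    intro x
    conv_rhs => rw [← cons_tail x]
    rw [W_cons, ← ih]
    simp [wd]

lemma wd_take (m : ℕ) : ∀ t x, m ≤ t → (wd t x).take m = wd m x := by
  induction m with
  | zero => intro t x _; simp [wd]
  | succ m ih =>
    intro t x h
    cases t with
    | zero => omega
    | succ t => simp only [wd, List.take_succ_cons]; rw [ih t _ (by omega)]

lemma wd_app (w : List ℤ) (y : ℕ → ℤ) : wd w.length (app w y) = w := by
  induction w with
  | nil => rfl
  | cons a w ih => simp only [List.length_cons, wd, app, tail_cons, ih]; rfl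

lemma drp_app (w : List ℤ) (y : ℕ → ℤ) : drp w.length (app w y) = y := by
  induction w with
  | nil => rfl
  | cons a w ih => simp only [List.length_cons, drp, app, tail_cons, ih]

lemma app_agree (w : List ℤ) (y z : ℕ → ℤ) : ∀ i < w.length, app w y i = app w z i := by
  induction w with
  | nil => intro i hi; simp at hi
  | cons a w ih =>
    intro i hi
    cases i with
    | zero => rfl
    | succ i => exact ih i (by simpa using hi)

lemma mem_range_app (w : List ℤ) (x : ℕ → ℤ) :
    x ∈ Set.range (app w) ↔ wd w.length x = w := by
  constructor
  · rintro ⟨y, rfl⟩; exact wd_app w y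
  · intro h
    exact ⟨drp w.length x, by conv_lhs => rw [← h, wd_length, app_wd]⟩

lemma range_app_cons (a : ℤ) (w : List ℤ) :
    Set.range (app (a :: w)) = {x | x 0 = a} ∩ tail ⁻¹' Set.range (app w) := by
  ext x
  rw [Set.mem_inter_iff, Set.mem_preimage, mem_range_app, mem_range_app]
  simp [wd]

lemma meas_range (w : List ℤ) : MeasurableSet (Set.range (app w)) := by
  induction w with
  | nil =>
    have : Set.range (app []) = Set.univ := by
      ext x; simp [app]
    rw [this]; exact MeasurableSet.univ
  | cons a w ih =>
    rw [range_app_cons]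
    exact ((measurable_pi_apply 0) (measurableSet_singleton a)).inter (measurable_tail ih)

/-- the set of words of first returns to the origin at or after time `n` -/
def C (n : ℕ) : Set (List ℤ) :=
  {w | n ≤ w.length ∧ w.sum = 0 ∧ ∀ m, n ≤ m → m < w.length → (w.take m).sum ≠ 0}

lemma C_lt {n : ℕ} {w w' : List ℤ} (hw : w ∈ C n) (hw' : w' ∈ C n) {x : ℕ → ℤ}
    (h : x ∈ Set.range (app w)) (h' : x ∈ Set.range (app w')) : ¬ w.length < w'.length := by
  intro hlt
  rw [mem_range_app] at h h'
  refine hw'.2.2 w.length hw.1 hlt ?_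
  rw [← h', wd_take _ _ _ hlt.le, h]
  exact hw.2.1

lemma C_eq {n : ℕ} {w w' : List ℤ} (hw : w ∈ C n) (hw' : w' ∈ C n) {x : ℕ → ℤ}
    (h : x ∈ Set.range (app w)) (h' : x ∈ Set.range (app w')) : w = w' := by
  have h1 := C_lt hw hw' h h'
  have h2 := C_lt hw' hw h' h
  rw [mem_range_app] at h h'
  rw [← h, ← h', show w.length = w'.length by omega]

lemma C_cover {n : ℕ} {x : ℕ → ℤ} (h : ∃ t, n ≤ t ∧ W x t = 0) :
    ∃ w ∈ C n, x ∈ Set.range (app w) := by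
  classical
  have hs := Nat.find_spec h
  refine ⟨wd (Nat.find h) x, ⟨by rw [wd_length]; exact hs.1, by rw [wd_sum]; exact hs.2, ?_⟩,
    ⟨_, app_wd _ x⟩⟩
  intro m hm hlt
  rw [wd_length] at hlt
  rw [wd_take _ _ _ hlt.le, wd_sum]
  exact fun h0 => Nat.find_min h hlt ⟨hm, h0⟩

noncomputable def wt (w : List ℤ) : ℝ≥0∞ :=
  (w.map fun a => if a = 1 ∨ a = -1 then 2⁻¹ else 0).prod

section
variable {P : Measure (ℕ → ℤ)}

def Markov (P : Measure (ℕ → ℤ)) : Prop := ∀ E, MeasurableSet E →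
  P E = 2⁻¹ * P (cons 1 ⁻¹' E) + 2⁻¹ * P (cons (-1) ⁻¹' E)

lemma cyl (hP : Markov P) (w : List ℤ) : ∀ E, MeasurableSet E →
    P (Set.range (app w) ∩ E) = wt w * P (app w ⁻¹' E) := by
  induction w with
  | nil =>
    intro E hE
    have h1 : Set.range (app []) = Set.univ := by
      ext x; simp [app]
    have h2 : app [] ⁻¹' E = E := rfl
    simp [h1, h2, wt]
  | cons a w ih =>
    intro E hE
    have key : ∀ b : ℤ, cons b ⁻¹' (Set.range (app (a :: w)) ∩ E)
        = if b = a then Set.range (app w) ∩ cons a ⁻¹' E else ∅ := by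
      intro b
      ext x
      rw [Set.mem_preimage, range_app_cons]
      split_ifs with h
      · subst h
        simp [tail_cons, cons]
      · simp [cons, h]
    have hpre : app (a :: w) ⁻¹' E = app w ⁻¹' (cons a ⁻¹' E) := rfl
    rw [hP _ ((meas_range _).inter hE), key, key, hpre]
    have hw : wt (a :: w) = (if a = 1 ∨ a = -1 then 2⁻¹ else 0) * wt w := by
      simp [wt]
    rw [hw, mul_assoc, ← ih _ (measurable_cons a hE)]
    by_cases h1 : a = 1
    · subst h1; simp
    · by_cases h2 : a = -1
      · subst h2; simp
      · simp [h1, h2, Ne.symm h1, Ne.symm h2]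

lemma never (hP : Markov P) [IsProbabilityMeasure P] (k : ℤ) :
    P {x | ∀ t, k + W x t ≠ 0} = 0 := by
  let q : ℤ → ℝ := fun k => P.real {x | ∀ t, k + W x t ≠ 0}
  have hm : ∀ k : ℤ, MeasurableSet {x : ℕ → ℤ | ∀ t, k + W x t ≠ 0} := by
    intro k
    have : {x : ℕ → ℤ | ∀ t, k + W x t ≠ 0} = ⋂ t, (fun x => W x t) ⁻¹' {y | k + y ≠ 0} := by
      ext x; simp
    rw [this]
    exact MeasurableSet.iInter fun t => measurable_W t (Set.to_countable _).measurableSet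
  have hq0 : q 0 = 0 := by
    have : {x : ℕ → ℤ | ∀ t, (0 : ℤ) + W x t ≠ 0} = ∅ := by
      ext x
      simp only [Set.mem_ofPred_eq, Set.mem_empty_iff_false, iff_false, not_forall, not_not]
      exact ⟨0, by simp [W]⟩
    simp only [q, this, measureReal_empty]
  have hpre : ∀ k a : ℤ, k ≠ 0 →
      cons a ⁻¹' {x : ℕ → ℤ | ∀ t, k + W x t ≠ 0} = {x | ∀ t, k + a + W x t ≠ 0} := by
    intro k a hk
    ext x
    simp only [Set.mem_preimage, Set.mem_ofPred_eq]
    constructor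
    · intro h t
      have := h (t + 1)
      rwa [W_cons, ← add_assoc] at this
    · intro h t
      cases t with
      | zero => simpa [W] using hk
      | succ t => rw [W_cons, ← add_assoc]; exact h t
  have hh : ∀ k : ℤ, k ≠ 0 → 2 * q k = q (k + 1) + q (k - 1) := by
    intro k hk
    have := hP _ (hm k)
    rw [hpre k 1 hk, hpre k (-1) hk] at this
    simp only [q, measureReal_def, sub_eq_add_neg]
    rw [this, ENNReal.toReal_add (by finiteness) (by finiteness), ENNReal.toReal_mul,
      ENNReal.toReal_mul]
    simp
    ring
  have hpos : ∀ n : ℕ, q n = n * q 1 ∧ q (n + 1) = (n + 1) * q 1 := by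
    intro n
    induction n with
    | zero => simp [hq0]
    | succ n ih =>
      have := hh (n + 1) (by omega)
      rw [add_sub_cancel_right] at this
      push_cast
      refine ⟨ih.2, ?_⟩
      linarith [ih.1, ih.2]
  have hneg : ∀ n : ℕ, q (-n) = n * q (-1) ∧ q (-(n + 1)) = (n + 1) * q (-1) := by
    intro n
    induction n with
    | zero => simp [hq0]
    | succ n ih =>
      have := hh (-(n + 1)) (by omega)
      rw [show -((n : ℤ) + 1) + 1 = -n by ring, show -((n : ℤ) + 1) - 1 = -(n + 1 + 1) by ring]
        at this
      push_cast
      refine ⟨ih.2, ?_⟩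
      linarith [ih.1, ih.2]
  have hle : ∀ k, q k ≤ 1 := fun k => measureReal_le_one
  have hge : ∀ k, 0 ≤ q k := fun k => measureReal_nonneg
  have bd : ∀ c : ℝ, 0 ≤ c → (∀ n : ℕ, n * c ≤ 1) → c = 0 := by
    intro c hc h
    by_contra hne
    have hc' : 0 < c := lt_of_le_of_ne hc (Ne.symm hne)
    obtain ⟨n, hn⟩ := exists_nat_gt (1 / c)
    rw [div_lt_iff₀ hc'] at hn
    linarith [h n]
  have h1 : q 1 = 0 := bd _ (hge 1) fun n => (hpos n).1 ▸ hle n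
  have h2 : q (-1) = 0 := bd _ (hge _) fun n => (hneg n).1 ▸ hle (-n)
  have : q k = 0 := by
    obtain ⟨n, rfl | rfl⟩ := k.eq_nat_or_neg
    · rw [(hpos n).1, h1, mul_zero]
    · rw [(hneg n).1, h2, mul_zero]
  exact (measureReal_eq_zero_iff).1 this

lemma meas_never (n : ℕ) (k : ℤ) :
    MeasurableSet {x : ℕ → ℤ | ∀ t, n ≤ t → k + W x t ≠ 0} := by
  have : {x : ℕ → ℤ | ∀ t, n ≤ t → k + W x t ≠ 0}
      = ⋂ t, ⋂ _ : n ≤ t, (fun x => W x t) ⁻¹' {y | k + y ≠ 0} := by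
    ext x; simp
  rw [this]
  exact MeasurableSet.iInter fun t => MeasurableSet.iInter fun _ =>
    measurable_W t (Set.to_countable _).measurableSet

lemma never' (hP : Markov P) [IsProbabilityMeasure P] (n : ℕ) : ∀ k : ℤ,
    P {x | ∀ t, n ≤ t → k + W x t ≠ 0} = 0 := by
  induction n with
  | zero => intro k; simpa using never hP k
  | succ n ih =>
    intro k
    have hpre : ∀ a : ℤ, cons a ⁻¹' {x : ℕ → ℤ | ∀ t, n + 1 ≤ t → k + W x t ≠ 0}
        ⊆ {x | ∀ t, n ≤ t → k + a + W x t ≠ 0} := by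
      intro a x h t ht
      have := h (t + 1) (by omega)
      rwa [W_cons, ← add_assoc] at this
    rw [hP _ (meas_never _ _), measure_mono_null (hpre 1) (ih _),
      measure_mono_null (hpre (-1)) (ih _)]
    simp

lemma decomp (hP : Markov P) [IsProbabilityMeasure P] (n : ℕ) {E : Set (ℕ → ℤ)}
    (hE : MeasurableSet E) : P E = ∑' w : C n, wt w * P (app w ⁻¹' E) := by
  have h0 : P E = P (⋃ w : C n, Set.range (app w) ∩ E) := by
    apply le_antisymm
    · have hsub : E ⊆ (⋃ w : C n, Set.range (app w) ∩ E)
          ∪ {x | ∀ t, n ≤ t → (0 : ℤ) + W x t ≠ 0} := by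
        intro x hx
        by_cases h : ∃ t, n ≤ t ∧ W x t = 0
        · obtain ⟨w, hw, hxw⟩ := C_cover h
          exact Or.inl (Set.mem_iUnion.2 ⟨⟨w, hw⟩, hxw, hx⟩)
        · right
          intro t ht h0
          exact h ⟨t, ht, by simpa using h0⟩
      refine (measure_mono hsub).trans ((measure_union_le _ _).trans ?_)
      rw [never' hP n 0, add_zero]
    · exact measure_mono (Set.iUnion_subset fun w => Set.inter_subset_right)
  rw [h0, measure_iUnion]
  · exact tsum_congr fun w => cyl hP w E hE
  · intro u v huv
    refine Set.disjoint_left.2 fun x hx hx' => huv ?_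
    exact Subtype.ext (C_eq u.2 v.2 hx.1 hx'.1)
  · exact fun w => (meas_range _).inter hE

/-- `B` evaluated after the first return at or after time `n` -/
def later (n : ℕ) (B : Set (ℕ → ℤ)) : Set (ℕ → ℤ) :=
  ⋃ u : C n, Set.range (app u) ∩ drp u.1.length ⁻¹' B

lemma meas_later (n : ℕ) {B : Set (ℕ → ℤ)} (hB : MeasurableSet B) :
    MeasurableSet (later n B) :=
  MeasurableSet.iUnion fun _ => (meas_range _).inter (measurable_drp _ hB)

lemma pre_later (n : ℕ) (B : Set (ℕ → ℤ)) {u : List ℤ} (hu : u ∈ C n) :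
    app u ⁻¹' later n B = B := by
  ext x
  simp only [later, Set.mem_preimage, Set.mem_iUnion]
  constructor
  · rintro ⟨v, hv, hx⟩
    have : u = v := C_eq hu v.2 ⟨x, rfl⟩ hv
    rw [Set.mem_preimage, ← this, drp_app] at hx
    exact hx
  · intro hx
    exact ⟨⟨u, hu⟩, ⟨x, rfl⟩, by rw [Set.mem_preimage, drp_app]; exact hx⟩

lemma pre_B {n : ℕ} {B : Set (ℕ → ℤ)}
    (hB : ∀ x y : ℕ → ℤ, (∀ i < n, x i = y i) → (x ∈ B ↔ y ∈ B)) {u : List ℤ} (hu : u ∈ C n)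
    (x y : ℕ → ℤ) : app u x ∈ B ↔ app u y ∈ B :=
  hB _ _ fun i hi => app_agree u x y i (hi.trans_le hu.1)

lemma exch (hP : Markov P) [IsProbabilityMeasure P] {n : ℕ} {B : Set (ℕ → ℤ)}
    (hBm : MeasurableSet B)
    (hB : ∀ x y : ℕ → ℤ, (∀ i < n, x i = y i) → (x ∈ B ↔ y ∈ B)) :
    P (A 0 0 ∩ B) = P (A 0 0 ∩ later n B) := by
  have hA := meas_A 0 0
  have expand : ∀ E, MeasurableSet E → P E = ∑' u : C n, ∑' v : C n,
      wt u * (wt v * P (app v ⁻¹' (app u ⁻¹' E))) := by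
    intro E hE
    rw [decomp hP n hE]
    refine tsum_congr fun u => ?_
    rw [decomp hP n (measurable_app _ hE), ENNReal.tsum_mul_left]
  rw [expand _ (hA.inter hBm), expand _ (hA.inter (meas_later n hBm)), ENNReal.tsum_comm]
  refine tsum_congr fun v => tsum_congr fun u => ?_
  have : app v ⁻¹' (app u ⁻¹' (A 0 0 ∩ B)) = app u ⁻¹' (app v ⁻¹' (A 0 0 ∩ later n B)) := by
    rw [Set.preimage_inter, Set.preimage_inter, Set.preimage_inter, Set.preimage_inter,
      pre_later n B v.2]
    ext x
    simp only [Set.mem_inter_iff, Set.mem_preimage]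
    rw [swap u v u.2.2.1 v.2.2.1, pre_B hB u.2 (app v x) x]
  rw [this, mul_left_comm]

lemma indep (hP : Markov P) [IsProbabilityMeasure P] {n : ℕ} {B : Set (ℕ → ℤ)}
    (hBm : MeasurableSet B)
    (hB : ∀ x y : ℕ → ℤ, (∀ i < n, x i = y i) → (x ∈ B ↔ y ∈ B)) :
    P (B ∩ later n B) = P B * P B := by
  rw [decomp hP n (hBm.inter (meas_later n hBm))]
  have hd : P B * P B = (∑' w : C n, wt w * P (app w ⁻¹' B)) * P B := by
    rw [← decomp hP n hBm]
  rw [hd, ← ENNReal.tsum_mul_right]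
  refine tsum_congr fun u => ?_
  rw [Set.preimage_inter, pre_later n B u.2, mul_assoc]
  congr 1
  by_cases h : app u 0 ∈ B
  · have : app u ⁻¹' B = Set.univ := by
      ext x; simp [pre_B hB u.2 x 0, h]
    simp [this]
  · have : app u ⁻¹' B = ∅ := by
      ext x; simp [pre_B hB u.2 x 0, h]
    simp [this]

lemma zero_one (hP : Markov P) [IsProbabilityMeasure P] : P (A 0 0) = 0 ∨ P (A 0 0) = 1 := by
  have hA := meas_A 0 0
  set D := A 0 0 with hD
  have dense : P.MeasureDense (measurableCylinders fun _ : ℕ => ℤ) :=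
    Measure.MeasureDense.of_generateFrom_isSetAlgebra_finite P isSetAlgebra_measurableCylinders
      generateFrom_measurableCylinders.symm
  have key : ∀ ε : ℝ, 0 < ε → |P.real D - P.real D * P.real D| ≤ 4 * ε := by
    intro ε hε
    obtain ⟨B, hBc, hBε⟩ := dense.approx D hA (by finiteness) ε hε
    have hBm := dense.measurable B hBc
    obtain ⟨s, T, -, hBT⟩ := (mem_measurableCylinders B).1 hBc
    obtain ⟨n, hn⟩ : ∃ n, ∀ i ∈ s, i < n := ⟨s.sup id + 1, fun i hi =>
      Nat.lt_succ_of_le (Finset.le_sup (f := id) hi)⟩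
    have hB : ∀ x y : ℕ → ℤ, (∀ i < n, x i = y i) → (x ∈ B ↔ y ∈ B) := by
      intro x y h
      rw [hBT, mem_cylinder, mem_cylinder]
      have : s.restrict x = s.restrict y := by
        funext i
        exact h i (hn i i.2)
      rw [this]
    have he : P.real (D ∆ B) ≤ ε := by
      rw [measureReal_def]
      exact ENNReal.toReal_le_of_le_ofReal hε.le hBε.le
    have e1 : P.real (D ∩ B) = P.real (D ∩ later n B) := by
      simp only [measureReal_def, hD, exch hP hBm hB]
    have e2 : P.real (B ∩ later n B) = P.real B * P.real B := by
      simp only [measureReal_def, indep hP hBm hB, ENNReal.toReal_mul]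
    have sub : ∀ X Y : Set (ℕ → ℤ), X ⊆ Y ∪ (D ∆ B) → P.real X ≤ P.real Y + ε := by
      intro X Y h
      have := (measureReal_mono (μ := P) h).trans (measureReal_union_le _ _)
      linarith
    have i1 := sub D (D ∩ B) (by
      intro x hx; by_cases h : x ∈ B
      · exact Or.inl ⟨hx, h⟩
      · exact Or.inr (Or.inl ⟨hx, h⟩))
    have i2 : P.real (D ∩ B) ≤ P.real D := measureReal_mono Set.inter_subset_left
    have i3 := sub (D ∩ later n B) (B ∩ later n B) (by
      rintro x ⟨hx, hx'⟩; by_cases h : x ∈ B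
      · exact Or.inl ⟨h, hx'⟩
      · exact Or.inr (Or.inl ⟨hx, h⟩))
    have i4 := sub (B ∩ later n B) (D ∩ later n B) (by
      rintro x ⟨hx, hx'⟩; by_cases h : x ∈ D
      · exact Or.inl ⟨h, hx'⟩
      · exact Or.inr (Or.inr ⟨hx, h⟩))
    have i5 := sub D B (by
      intro x hx; by_cases h : x ∈ B
      · exact Or.inl h
      · exact Or.inr (Or.inl ⟨hx, h⟩))
    have i6 := sub B D (by
      intro x hx; by_cases h : x ∈ D
      · exact Or.inl h
      · exact Or.inr (Or.inr ⟨hx, h⟩))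
    have b1 : P.real B ≤ 1 := measureReal_le_one
    have b2 : P.real D ≤ 1 := measureReal_le_one
    have b3 : 0 ≤ P.real B := measureReal_nonneg
    have b4 : 0 ≤ P.real D := measureReal_nonneg
    rw [abs_le]
    constructor <;> nlinarith
  have h0 : P.real D - P.real D * P.real D = 0 := by
    by_contra hne
    have hpos := abs_pos.2 hne
    have := key (|P.real D - P.real D * P.real D| / 8) (by positivity)
    linarith
  have : P.real D * (1 - P.real D) = 0 := by linarith
  rcases mul_eq_zero.1 this with h | h
  · left; exact (measureReal_eq_zero_iff).1 h
  · right
    have h1 : (P D).toReal = 1 := by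
      rw [measureReal_def] at h; linarith
    rwa [ENNReal.toReal_eq_one_iff] at h1

end

lemma markov_infinitePi (ν : Measure ℤ) [IsProbabilityMeasure ν]
    (h1 : ν {1} = 2⁻¹) (h2 : ν {-1} = 2⁻¹) :
    Markov (Measure.infinitePi fun _ : ℕ => ν) := by
  classical
  set P := Measure.infinitePi fun _ : ℕ => ν with hPdef
  have hν : ∀ T : Set ℤ, ν T = 2⁻¹ * T.indicator 1 1 + 2⁻¹ * T.indicator 1 (-1) := by
    have : ν = (2⁻¹ : ℝ≥0∞) • Measure.dirac 1 + (2⁻¹ : ℝ≥0∞) • Measure.dirac (-1) := by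
      have hpair : ν {1, -1} = 1 := by
        rw [Set.insert_eq, measure_union (by simp) (measurableSet_singleton _), h1, h2,
          ENNReal.inv_two_add_inv_two]
      have hc : ν {1, -1}ᶜ = 0 := by
        rw [measure_compl (Set.to_countable _).measurableSet (by finiteness), hpair]
        simp
      refine Measure.ext_of_singleton fun k => ?_
      by_cases k1 : k = 1
      · subst k1; simp [h1]
      by_cases k2 : k = -1
      · subst k2; simp [h2]
      rw [measure_mono_null (Set.singleton_subset_iff.2 (by simp [k1, k2])) hc]
      simp [Ne.symm k1, Ne.symm k2]
    intro T
    conv_lhs => rw [this]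
    simp
  have hmap : (2⁻¹ : ℝ≥0∞) • P.map (cons 1) + (2⁻¹ : ℝ≥0∞) • P.map (cons (-1)) = P := by
    refine Measure.eq_infinitePi _ fun s t ht => ?_
    obtain ⟨n, hn⟩ : ∃ n, ∀ i ∈ s, i < n + 1 := ⟨s.sup id, fun i hi =>
      Nat.lt_succ_of_le (Finset.le_sup (f := id) hi)⟩
    let t' : ℕ → Set ℤ := fun i => if i ∈ s then t i else Set.univ
    have ht' : ∀ i, MeasurableSet (t' i) := fun i => (Set.to_countable _).measurableSet
    have hset : Set.pi (s : Set ℕ) t = Set.pi (Finset.range (n + 1) : Set ℕ) t' := by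
      ext x
      simp only [Set.mem_pi, Finset.mem_coe, Finset.mem_range, t']
      constructor
      · intro h i _
        by_cases hi : i ∈ s
        · simpa [hi] using h i hi
        · simp [hi]
      · intro h i hi
        simpa [hi] using h i (hn i hi)
    have hprod : ∏ i ∈ s, ν (t i) = ∏ i ∈ Finset.range (n + 1), ν (t' i) := by
      have hsub : s ⊆ Finset.range (n + 1) := fun i hi => Finset.mem_range.2 (hn i hi)
      rw [← Finset.prod_subset hsub (f := fun i => ν (t' i))]
      · exact Finset.prod_congr rfl fun i hi => by simp [t', hi]
      · intro i _ hi
        simp [t', hi]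
    have hpre : ∀ a : ℤ, P (cons a ⁻¹' Set.pi (Finset.range (n + 1) : Set ℕ) t')
        = (t' 0).indicator 1 a * ∏ i ∈ Finset.range n, ν (t' (i + 1)) := by
      intro a
      by_cases ha : a ∈ t' 0
      · have : cons a ⁻¹' Set.pi (Finset.range (n + 1) : Set ℕ) t'
            = Set.pi (Finset.range n : Set ℕ) (fun i => t' (i + 1)) := by
          ext x
          simp only [Set.mem_preimage, Set.mem_pi, Finset.mem_coe, Finset.mem_range]
          constructor
          · intro h i hi
            exact h (i + 1) (by omega)
          · intro h i hi
            cases i with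
            | zero => exact ha
            | succ i => exact h i (by omega)
        rw [this, hPdef, Measure.infinitePi_pi _ (fun i _ => ht' (i + 1))]
        simp [ha]
      · have : cons a ⁻¹' Set.pi (Finset.range (n + 1) : Set ℕ) t' = ∅ := by
          ext x
          simp only [Set.mem_preimage, Set.mem_pi, Finset.mem_coe, Finset.mem_range,
            Set.mem_empty_iff_false, iff_false]
          exact fun h => ha (h 0 (by omega))
        rw [this]
        simp [ha]
    have hm : MeasurableSet (Set.pi (Finset.range (n + 1) : Set ℕ) t') :=
      MeasurableSet.pi (Set.to_countable _) fun i _ => ht' i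
    rw [hset, hprod, Finset.prod_range_succ', hν (t' 0)]
    simp only [Measure.coe_add, Measure.coe_smul, Pi.add_apply, Pi.smul_apply, smul_eq_mul]
    rw [Measure.map_apply (measurable_cons _) hm, Measure.map_apply (measurable_cons _) hm,
      hpre, hpre]
    ring
  intro E hE
  conv_lhs => rw [← hmap]
  simp only [Measure.coe_add, Measure.coe_smul, Pi.add_apply, Pi.smul_apply, smul_eq_mul]
  rw [Measure.map_apply (measurable_cons _) hE, Measure.map_apply (measurable_cons _) hE]

end FavWalk


/-- A zero-one law: the probability that `f(3) = ∞` is either 0 or 1. -/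
theorem f_three_eq_top_zero_one_law
    {Ω : Type*} [MeasurableSpace Ω] (μ : Measure Ω) [IsProbabilityMeasure μ]
    -- i.i.d. steps, each uniform on {−1, 1}
    (ξ : ℕ → Ω → ℤ) (hξmeas : ∀ i, Measurable (ξ i))
    (hξindep : iIndepFun ξ μ)
    (hξ1 : ∀ i, μ {ω | ξ i ω = 1} = 1 / 2)
    (hξ2 : ∀ i, μ {ω | ξ i ω = -1} = 1 / 2)
    -- the simple random walk
    (S : ℕ → Ω → ℤ) (hS : ∀ t ω, S t ω = ∑ i ∈ Finset.range t, ξ i ω)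
    -- local times
    (L : ℕ → ℤ → Ω → ℕ)
    (hL : ∀ t x ω, L t x ω = ((Finset.Icc 1 t).filter fun k => S k ω = x).card)
    -- favorite (most visited) sites
    (Fav : ℕ → Ω → Set ℤ)
    (hFav : ∀ t ω, Fav t ω = {y : ℤ | ∀ z : ℤ, L t z ω ≤ L t y ω})
    -- `f3 ω` is the number of times `t ≥ 1` at which the currently occupied site is a
    -- favorite site and there are exactly three favorite sites
    (f3 : Ω → ℕ∞)
    (hf3 : ∀ ω, f3 ω =
      {t : ℕ | 1 ≤ t ∧ S t ω ∈ Fav t ω ∧ (Fav t ω).encard = 3}.encard) :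
    μ {ω | f3 ω = ⊤} = 0 ∨ μ {ω | f3 ω = ⊤} = 1 := by
  have hΦ : Measurable (fun ω i => ξ i ω) := measurable_pi_lambda _ hξmeas
  have hmap : ∀ i, μ.map (ξ i) = μ.map (ξ 0) := by
    have key : ∀ i, μ.map (ξ i) {1} = 2⁻¹ ∧ μ.map (ξ i) {-1} = 2⁻¹ := by
      intro i
      rw [Measure.map_apply (hξmeas i) (measurableSet_singleton _),
        Measure.map_apply (hξmeas i) (measurableSet_singleton _)]
      have a1 := hξ1 i
      have a2 := hξ2 i
      rw [one_div] at a1 a2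
      exact ⟨a1, a2⟩
    have hz : ∀ i, ∀ k : ℤ, k ≠ 1 → k ≠ -1 → μ.map (ξ i) {k} = 0 := by
      intro i k k1 k2
      have := Measure.isProbabilityMeasure_map (μ := μ) (hξmeas i).aemeasurable
      have hpair : μ.map (ξ i) {1, -1} = 1 := by
        rw [Set.insert_eq, measure_union (by simp) (measurableSet_singleton _), (key i).1,
          (key i).2, ENNReal.inv_two_add_inv_two]
      have hc : μ.map (ξ i) {1, -1}ᶜ = 0 := by
        rw [measure_compl (Set.to_countable _).measurableSet (by finiteness), hpair]
        simp
      exact measure_mono_null (Set.singleton_subset_iff.2 (by simp [k1, k2])) hc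
    intro i
    refine Measure.ext_of_singleton fun k => ?_
    by_cases k1 : k = 1
    · rw [k1, (key i).1, (key 0).1]
    by_cases k2 : k = -1
    · rw [k2, (key i).2, (key 0).2]
    rw [hz i k k1 k2, hz 0 k k1 k2]
  have hν := Measure.isProbabilityMeasure_map (μ := μ) (hξmeas 0).aemeasurable
  have hlaw : μ.map (fun ω i => ξ i ω) = Measure.infinitePi fun _ : ℕ => μ.map (ξ 0) := by
    rw [(iIndepFun_iff_map_fun_eq_infinitePi_map hξmeas).1 hξindep]
    congr 1
    funext i
    exact hmap i
  have hM : FavWalk.Markov (μ.map (fun ω i => ξ i ω)) := by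
    rw [hlaw]
    refine FavWalk.markov_infinitePi _ ?_ ?_
    · rw [Measure.map_apply (hξmeas 0) (measurableSet_singleton _), ← one_div]
      exact hξ1 0
    · rw [Measure.map_apply (hξmeas 0) (measurableSet_singleton _), ← one_div]
      exact hξ2 0
  have := Measure.isProbabilityMeasure_map (μ := μ) hΦ.aemeasurable
  have hset : {ω | f3 ω = ⊤} = (fun ω i => ξ i ω) ⁻¹' FavWalk.A 0 0 := by
    ext ω
    have hSW : ∀ t, S t ω = FavWalk.W (fun i => ξ i ω) t := fun t => hS t ω
    have hLl : ∀ t x, L t x ω = FavWalk.loc 0 0 (fun i => ξ i ω) t x := by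
      intro t x
      rw [hL, Finset.card_filter, FavWalk.loc, Finset.range_eq_Ico,
        Finset.sum_Ico_add' (fun k => if 0 + FavWalk.W (fun i => ξ i ω) k = x then 1 else 0) 0 t 1]
      have : Finset.Icc 1 t = Finset.Ico (0 + 1) (t + 1) := by
        ext k; simp
      rw [this]
      simp [hSW]
    have hF : ∀ t, Fav t ω = FavWalk.fav 0 0 (fun i => ξ i ω) t := by
      intro t
      rw [hFav, FavWalk.fav]
      simp only [hLl]
    have hQ : {t : ℕ | 1 ≤ t ∧ S t ω ∈ Fav t ω ∧ (Fav t ω).encard = 3}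
        = {t | 1 ≤ t ∧ FavWalk.Q 0 0 (fun i => ξ i ω) t} := by
      simp only [FavWalk.Q, hF, hSW, zero_add]
    rw [Set.mem_preimage]
    change f3 ω = ⊤ ↔ ∃ᶠ t in Filter.atTop, FavWalk.Q 0 0 (fun i => ξ i ω) t
    rw [hf3, hQ, Set.encard_eq_top_iff, ← Nat.frequently_atTop_iff_infinite]
    constructor
    · exact fun h => h.mono fun t ht => ht.2
    · exact fun h => (h.and_eventually (Filter.eventually_ge_atTop 1)).mono fun t ht =>
        ⟨ht.2, ht.1⟩
  rw [hset, ← Measure.map_apply hΦ (FavWalk.meas_A 0 0)]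
  exact FavWalk.zero_one hM
end

section
/- Almost surely f(3) ≥ N, where N = Σ_{h=1}^∞ Σ_{k∈I_h∩ℤ} Σ_{x=1}^∞ 1_{A_{x,h}^{(k)}} (an identity of extended-natural-number valued random variables). In particular, if N = ∞ then f(3) = ∞. -/
open MeasureTheory ProbabilityTheory
open scoped Classical

theorem enat_summable_aux {α : Type*} (f : α → ℕ∞) : Summable f :=
  ⟨_, tendsto_atTop_iSup (fun _ _ h => Finset.sum_le_sum_of_subset h)⟩

theorem enat_tsum_triple_le (P : ℕ → ℕ → ℕ → Prop) [∀ h k x, Decidable (P h k x)] (T : Set ℕ) (g : ℕ × ℕ × ℕ → ℕ)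
    (hg : ∀ h k x, P h k x → g (h, k, x) ∈ T)
    (hinj : ∀ a b : ℕ × ℕ × ℕ, P a.1 a.2.1 a.2.2 → P b.1 b.2.1 b.2.2 → g a = g b → a = b) :
    (∑' (h : ℕ) (k : ℕ) (x : ℕ), if P h k x then (1 : ℕ∞) else 0) ≤ T.encard := by
  have h1 : (∑' (h : ℕ) (k : ℕ) (x : ℕ), if P h k x then (1 : ℕ∞) else 0)
      = ∑' a : ℕ × ℕ × ℕ, if P a.1 a.2.1 a.2.2 then (1 : ℕ∞) else 0 := by
    rw [(enat_summable_aux _).tsum_prod' (fun _ => enat_summable_aux _)]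
    refine tsum_congr fun h => ?_
    rw [(enat_summable_aux _).tsum_prod' (fun _ => enat_summable_aux _)]
  rw [h1]
  refine (enat_summable_aux _).tsum_le_of_sum_le fun s => ?_
  rw [Finset.sum_ite, Finset.sum_const_zero, add_zero, Finset.sum_const, nsmul_one,
    ← Set.encard_coe_eq_coe_finsetCard]
  refine Set.encard_le_encard_of_injOn (f := g) ?_ ?_
  · intro a ha
    simp only [Finset.coe_filter, Set.mem_ofPred_eq] at ha
    exact hg _ _ _ ha.2
  · intro a ha b hb hab
    simp only [Finset.coe_filter, Set.mem_ofPred_eq] at ha hb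
    exact hinj a b ha.2 hb.2 hab

/-- Almost surely `f(3) ≥ N`, where
`N = Σ_{h=1}^∞ Σ_{k ∈ I_h ∩ ℤ} Σ_{x=1}^∞ 1_{A_{x,h}^{(k)}}`.
In particular, if `N = ∞` then `f(3) = ∞`. -/
theorem f_three_ge_N
    {Ω : Type*} [MeasurableSpace Ω] (μ : Measure Ω) [IsProbabilityMeasure μ]
    -- i.i.d. steps, each uniform on {−1, 1}
    (ξ : ℕ → Ω → ℤ) (hξmeas : ∀ i, Measurable (ξ i))
    (hξindep : iIndepFun ξ μ)
    (hξ1 : ∀ i, μ {ω | ξ i ω = 1} = 1 / 2)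
    (hξ2 : ∀ i, μ {ω | ξ i ω = -1} = 1 / 2)
    -- the simple random walk
    (S : ℕ → Ω → ℤ) (hS : ∀ t ω, S t ω = ∑ i ∈ Finset.range t, ξ i ω)
    -- local times
    (L : ℕ → ℤ → Ω → ℕ)
    (hL : ∀ t x ω, L t x ω = ((Finset.Icc 1 t).filter fun k => S k ω = x).card)
    -- favorite (most visited) sites
    (Fav : ℕ → Ω → Set ℤ)
    (hFav : ∀ t ω, Fav t ω = {y : ℤ | ∀ z : ℤ, L t z ω ≤ L t y ω})
    -- `f3 ω` is the number of times `t ≥ 1` at which the currently occupied site is a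
    -- favorite site and there are exactly three favorite sites
    (f3 : Ω → ℕ∞)
    (hf3 : ∀ ω, f3 ω =
      {t : ℕ | 1 ≤ t ∧ S t ω ∈ Fav t ω ∧ (Fav t ω).encard = 3}.encard)
    -- upcrossing counts
    (U : ℕ → ℤ → Ω → ℕ)
    (hU : ∀ t x ω, U t x ω =
      ((Finset.Icc 1 t).filter fun k => S k ω = x ∧ S (k - 1) ω = x - 1).card)
    -- inverse upcrossing local times
    (TU : ℕ → ℤ → Ω → ℕ)
    (hTU : ∀ k x ω, TU k x ω = sInf {t : ℕ | 1 ≤ t ∧ U t x ω = k})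
    -- the event of three consecutive favorite sites x, x+1, x+2, with local time h at x,
    -- at the inverse upcrossing time T_U(k+1, x)
    (A : ℕ → ℕ → ℕ → Set Ω)
    (hA : ∀ x h k, A x h k = {ω |
      Fav (TU (k + 1) (x : ℤ) ω) ω = {(x : ℤ), (x : ℤ) + 1, (x : ℤ) + 2} ∧
      L (TU (k + 1) (x : ℤ) ω) (x : ℤ) ω = h})
    -- membership of k in the window I_h = ((h+√h)/2, (h+2√h)/2)
    (inI : ℕ → ℕ → Prop)
    (hinI : ∀ h k, inI h k ↔
      ((h : ℝ) + Real.sqrt h) / 2 < (k : ℝ) ∧ (k : ℝ) < ((h : ℝ) + 2 * Real.sqrt h) / 2)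
    -- the count N of instances of three consecutive favorite sites
    (N : Ω → ℕ∞)
    (hN : ∀ ω, N ω = ∑' (h : ℕ) (k : ℕ) (x : ℕ),
      if 1 ≤ h ∧ 1 ≤ x ∧ inI h k ∧ ω ∈ A x h k then (1 : ℕ∞) else 0) :
    ∀ᵐ ω ∂μ, N ω ≤ f3 ω := by
  refine Filter.Eventually.of_forall fun ω => ?_
  rw [hN, hf3]
  -- at the time `TU (k+1) x`, the walk is at `x` and has upcrossed `k+1` times
  have key : ∀ h k x : ℕ, ω ∈ A x h k →
      1 ≤ TU (k + 1) x ω ∧ U (TU (k + 1) x ω) x ω = k + 1 ∧ S (TU (k + 1) x ω) ω = x := by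
    intro h k x hω
    rw [hA] at hω
    obtain ⟨hF, -⟩ := hω
    have hne : {t : ℕ | 1 ≤ t ∧ U t x ω = k + 1}.Nonempty := by
      by_contra hcon
      rw [Set.not_nonempty_iff_eq_empty] at hcon
      have h0 : TU (k + 1) x ω = 0 := by rw [hTU, hcon, Nat.sInf_empty]
      rw [h0, hFav] at hF
      have hm : ((x : ℤ) + 3) ∈ {y : ℤ | ∀ z : ℤ, L 0 z ω ≤ L 0 y ω} := by
        intro z
        simp [hL]
      rw [hF] at hm
      simp only [Set.mem_insert_iff, Set.mem_singleton_iff] at hm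
      omega
    have hmem := Nat.sInf_mem hne
    rw [← hTU] at hmem
    obtain ⟨h1, h2⟩ := hmem
    refine ⟨h1, h2, ?_⟩
    by_contra hS'
    generalize hT : TU (k + 1) x ω = T at *
    obtain ⟨t, rfl⟩ : ∃ t, T = t + 1 := ⟨T - 1, by omega⟩
    have h3 : U t x ω = k + 1 := by
      rw [← h2, hU, hU, ← Finset.insert_Icc_right_eq_Icc_add_one (by omega), Finset.filter_insert,
        if_neg (fun hc => hS' hc.1)]
    have h4 : 1 ≤ t := by
      by_contra ht
      have : t = 0 := by omega
      subst this
      rw [hU] at h3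
      simp at h3
    have h5 : t + 1 ≤ t := by
      rw [← hT, hTU]
      exact Nat.sInf_le ⟨h4, h3⟩
    omega
  refine enat_tsum_triple_le (fun h k x => 1 ≤ h ∧ 1 ≤ x ∧ inI h k ∧ ω ∈ A x h k) _
    (fun a => TU (a.2.1 + 1) (a.2.2 : ℤ) ω) ?_ ?_
  · rintro h k x ⟨-, -, -, hω⟩
    obtain ⟨h1, -, h3⟩ := key h k x hω
    rw [hA] at hω
    refine ⟨h1, ?_, ?_⟩
    · simp only [h3, hω.1]
      simp
    · simp only [hω.1]
      rw [Set.encard_eq_three]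
      exact ⟨_, _, _, by omega, by omega, by omega, rfl⟩
  · rintro ⟨h, k, x⟩ ⟨h', k', x'⟩ ⟨-, -, -, hω⟩ ⟨-, -, -, hω'⟩ hab
    simp only at hω hω' hab
    obtain ⟨-, h2, h3⟩ := key h k x hω
    obtain ⟨-, h2', h3'⟩ := key h' k' x' hω'
    rw [hA] at hω hω'
    have e1 := hω.2
    have e2 := hω'.2
    rw [hab] at h2 h3 e1
    have hx : x = x' := by
      have := h3.symm.trans h3'
      exact_mod_cast this
    subst hx
    have hk : k = k' := by omega
    subst hk
    have hh : h = h' := by omega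
    subst hh
    rfl
end

section
/- There exists a constant C > 0 such that for all H ≥ 2, E[N_H²] ≤ C (log H) · E[N_H]. -/
namespace FS

/-- binomial point probability -/
noncomputable def bb (n k : ℕ) : ℝ := (n.choose k : ℝ) / 2 ^ n
/-- binomial upper tail -/
noncomputable def tl (n k : ℕ) : ℝ := ∑ i ∈ Finset.Icc k n, bb n i

lemma bb_nonneg (n k : ℕ) : 0 ≤ bb n k := by unfold bb; positivity
lemma tl_nonneg (n k : ℕ) : 0 ≤ tl n k := Finset.sum_nonneg fun _ _ => bb_nonneg _ _

lemma bb_symm {n k : ℕ} (h : k ≤ n) : bb n (n - k) = bb n k := by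
  unfold bb; rw [Nat.choose_symm h]

lemma bb_succ_succ (n k : ℕ) : bb (n+1) (k+1) = bb n k / 2 + bb n (k+1) / 2 := by
  unfold bb; rw [Nat.choose_succ_succ]; push_cast; field_simp; ring

lemma bb_zero (n : ℕ) {k : ℕ} (h : n < k) : bb n k = 0 := by
  unfold bb; rw [Nat.choose_eq_zero_of_lt h]; simp

lemma cb_sq (j : ℕ) : (j.centralBinom) ^ 2 * (3 * j + 1) ≤ 16 ^ j := by
  induction j with
  | zero => simp
  | succ j ih =>
    have h := Nat.succ_mul_centralBinom_succ j
    have h2 : ((j+1) * (j+1).centralBinom)^2 * (3*(j+1)+1) ≤ (j+1)^2 * 16^(j+1) := by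
      rw [h]
      calc (2 * (2 * j + 1) * j.centralBinom) ^ 2 * (3 * (j + 1) + 1)
          = (j.centralBinom)^2 * (4 * ((2*j+1)^2 * (3*j+4))) := by ring
        _ ≤ (j.centralBinom)^2 * (4 * (4 * (j+1)^2 * (3*j+1))) := by
            exact Nat.mul_le_mul_left _ (Nat.mul_le_mul_left _ (by nlinarith))
        _ = 16 * (j+1)^2 * ((j.centralBinom)^2 * (3*j+1)) := by ring
        _ ≤ 16 * (j+1)^2 * 16^j := by gcongr
        _ = _ := by ring
    have h3 : (j+1)^2 * ((j+1).centralBinom^2 * (3*(j+1)+1)) ≤ (j+1)^2 * 16^(j+1) := by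
      calc _ = ((j+1) * (j+1).centralBinom)^2 * (3*(j+1)+1) := by ring
        _ ≤ _ := h2
    exact Nat.le_of_mul_le_mul_left h3 (by positivity)

lemma choose_sq (n k : ℕ) : n * (n.choose k)^2 ≤ 4 ^ n := by
  have h0 : n * (n.choose k)^2 ≤ n * (n.choose (n/2))^2 := by
    gcongr; exact Nat.choose_le_middle k n
  refine h0.trans ?_
  rcases Nat.even_or_odd' n with ⟨j, rfl | rfl⟩
  · have : 2 * j / 2 = j := by omega
    rw [this]
    have := cb_sq j
    rw [Nat.centralBinom] at this
    rw [pow_mul]; norm_num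
    nlinarith [sq_nonneg ((2*j).choose j)]
  · have : (2 * j + 1) / 2 = j := by omega
    rw [this]
    have h1 := cb_sq (j+1)
    rw [Nat.centralBinom_eq_two_mul_choose] at h1
    have h2 : (2*(j+1)).choose (j+1) = 2 * (2*j+1).choose j := by
      rw [show 2*(j+1) = (2*j+1)+1 by ring, Nat.choose_succ_succ, Nat.choose_symm_half]; ring
    rw [h2] at h1
    have h3 : 4^(2*j+1) * 4 = 16^(j+1) := by
      rw [← pow_succ, show 2*j+1+1 = 2*(j+1) by ring, pow_mul]; norm_num
    nlinarith [sq_nonneg ((2*j+1).choose j)]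

lemma bb_sq (n k : ℕ) : (bb n k)^2 * n ≤ 1 := by
  unfold bb
  have h := choose_sq n k
  have h' : (n:ℝ) * (n.choose k : ℝ)^2 ≤ 4^n := by exact_mod_cast h
  rw [div_pow, div_mul_eq_mul_div, div_le_one (by positivity), ← pow_mul, mul_comm n 2, pow_mul]
  norm_num; linarith

lemma bb_le (n k : ℕ) : bb n k * √n ≤ 1 := by
  have h := bb_sq n k
  have : (bb n k * √n)^2 ≤ 1^2 := by rw [mul_pow, Real.sq_sqrt (by positivity)]; simpa using h
  exact (le_abs_self _).trans (abs_le_of_sq_le_sq this (by norm_num))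

lemma sum_bb (n : ℕ) : ∑ i ∈ Finset.range (n+1), bb n i = 1 := by
  unfold bb
  rw [← Finset.sum_div]
  have := Nat.sum_range_choose n
  rw [div_eq_one_iff_eq (by positivity)]
  exact_mod_cast this

/-- adding one trial -/
lemma tl_succ (n k : ℕ) : tl (n+1) (k+1) = tl n (k+1) + bb n k / 2 := by
  unfold tl
  by_cases hk : k ≤ n
  · have e1 : ∑ i ∈ Finset.Icc (k+1) (n+1), bb (n+1) i
        = ∑ i ∈ Finset.Icc k n, bb (n+1) (i+1) := by
      rw [← Finset.image_add_right_Icc k n 1 , Finset.sum_image (by intro a _ b _ h; simpa using h)]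
    rw [e1]
    simp_rw [bb_succ_succ]
    rw [Finset.sum_add_distrib]
    have e2 : ∑ i ∈ Finset.Icc k n, bb n (i+1) / 2 = ∑ i ∈ Finset.Icc (k+1) n, bb n i / 2 := by
      have : ∑ i ∈ Finset.Icc k n, bb n (i+1) / 2 = ∑ i ∈ Finset.Icc (k+1) (n+1), bb n i / 2 := by
        rw [← Finset.image_add_right_Icc k n 1 , Finset.sum_image (by intro a _ b _ h; simpa using h)]
      rw [this, ← Finset.insert_Icc_right_eq_Icc_add_one (by omega), Finset.sum_insert (by simp), bb_zero n (by omega)]; simp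
    have e3 : ∑ i ∈ Finset.Icc k n, bb n i / 2 = bb n k / 2 + ∑ i ∈ Finset.Icc (k+1) n, bb n i / 2 := by
      rw [← Finset.insert_Icc_add_one_left_eq_Icc hk, Finset.sum_insert (by simp)]
    rw [e2, e3, ← Finset.sum_div]; ring
  · rw [Finset.Icc_eq_empty (by omega), Finset.Icc_eq_empty (by omega), bb_zero n (by omega)]; simp

lemma tl_head (n k : ℕ) : tl n k = bb n k + tl n (k+1) := by
  unfold tl
  by_cases hk : k ≤ n
  · rw [← Finset.insert_Icc_add_one_left_eq_Icc hk, Finset.sum_insert (by simp)]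
  · rw [Finset.Icc_eq_empty (by omega), Finset.Icc_eq_empty (by omega), bb_zero n (by omega)]; simp

lemma tl_anti (c : ℕ) : Antitone fun k => tl (k + c) k := by
  refine antitone_nat_of_succ_le fun k => ?_
  show tl (k+1+c) (k+1) ≤ tl (k+c) k
  rw [show k+1+c = k+c+1 by ring, tl_succ, tl_head (k+c) k]
  linarith [bb_nonneg (k+c) k]

/-- window size -/
def JJ (c : ℕ) : ℕ := Nat.sqrt c / 2 + 1

lemma tl_base (c : ℕ) : 1/16 ≤ tl (c + JJ c + 1 + c) (c + JJ c + 1) := by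
  set J := JJ c with hJ
  set n := c + J + 1 + c with hn
  have hs : Nat.sqrt c * Nat.sqrt c ≤ c := Nat.sqrt_le c
  have hJ2 : 2 * J ≤ Nat.sqrt c + 2 := by rw [hJ, JJ]; omega
  have hJ1 : 1 ≤ J := by rw [hJ, JJ]; omega
  have hJn : 4 * (J * J) ≤ 3 * n := by nlinarith [sq_nonneg ((Nat.sqrt c : ℤ) - 1)]
  have hsum := sum_bb n
  have hsplit : Finset.range (n+1) = (Finset.range (c+1)) ∪ (Finset.Ico (c+1) (c+J+1) ∪ Finset.Icc (c+J+1) n) := by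
    ext i; simp; omega
  rw [hsplit, Finset.sum_union, Finset.sum_union] at hsum
  rotate_left
  · rw [Finset.disjoint_left]; intro i; simp; omega
  · rw [Finset.disjoint_left]; intro i; simp; omega
  have hsym : ∑ i ∈ Finset.range (c+1), bb n i = tl n (c+J+1) := by
    unfold tl
    refine Finset.sum_nbij' (fun i => n - i) (fun i => n - i) ?_ ?_ ?_ ?_ ?_
    · intro i; simp; omega
    · intro i; simp; omega
    · intro i; simp; omega
    · intro i; simp; omega
    · intro i hi; simp at hi; rw [bb_symm (by omega)]
  have hn0 : (0:ℝ) < n := by positivity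
  have hmid : ∑ i ∈ Finset.Ico (c+1) (c+J+1), bb n i ≤ J * (1/√n) := by
    calc _ ≤ ∑ i ∈ Finset.Ico (c+1) (c+J+1), 1/√n := by
          refine Finset.sum_le_sum fun i _ => ?_
          rw [le_div_iff₀ (by positivity)]; exact bb_le n i
      _ = _ := by simp
  have h78 : (J:ℝ) * (1/√n) ≤ 7/8 := by
    have hJn' : 4 * ((J:ℝ) * J) ≤ 3 * n := by exact_mod_cast hJn
    rw [mul_one_div, div_le_iff₀ (by positivity)]
    have h2 : (J:ℝ)^2 ≤ (7/8 * √n)^2 := by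
      rw [mul_pow, Real.sq_sqrt hn0.le]
      nlinarith
    exact (le_abs_self _).trans (abs_le_of_sq_le_sq h2 (by positivity))
  rw [hsym] at hsum
  change tl n (c+J+1) + (_ + tl n (c+J+1)) = 1 at hsum
  linarith

lemma tl_const {e o c : ℕ} (h : e + o ≤ c + JJ c + 1) : 1/16 ≤ tl (e + o + c) (e + o) :=
  (tl_base c).trans (tl_anti c h)

lemma bb_mono_n {b c j : ℕ} (h : c + j + 3 ≤ b) : bb (b+c+j) (b-1) ≤ bb (b+c+j+1) (b-1) := by
  obtain ⟨d, rfl⟩ : ∃ d, b = d + 1 := ⟨b-1, by omega⟩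
  simp only [Nat.add_sub_cancel]
  set n := d + 1 + c + j with hn
  have h1 := Nat.choose_mul_succ_eq n d
  have h1' : ((n.choose d : ℕ):ℝ) * (n+1) = ((n+1).choose d : ℕ) * ((n:ℝ) + 1 - d) := by
    have : ((n + 1 - d : ℕ):ℝ) = (n:ℝ)+1-d := by rw [Nat.cast_sub (by omega)]; push_cast; ring
    rw [← this]; exact_mod_cast h1
  unfold bb
  rw [pow_succ, div_le_div_iff₀ (by positivity) (by positivity)]
  have hd : (2:ℝ) * (n + 1 - d) ≤ n + 1 := by
    have : 2 * (n+1) ≤ (n + 1) + 2 * d := by omega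
    have : (2:ℝ) * (n+1) ≤ (n + 1) + 2 * d := by exact_mod_cast this
    linarith
  have hpos : (0:ℝ) < n + 1 - d := by
    have : d < n + 1 := by omega
    have : (d:ℝ) < n+1 := by exact_mod_cast this
    linarith
  have hp : (0:ℝ) < 2^n := by positivity
  have key : 2 * ((n.choose d : ℕ):ℝ) ≤ ((n+1).choose d : ℕ) := by
    by_contra hcon
    push Not at hcon
    have hc0 : (0:ℝ) ≤ (n.choose d : ℕ) := by positivity
    nlinarith
  nlinarith

lemma bb_mono_J {b c : ℕ} : ∀ J, c + J + 2 ≤ b → bb (b+c) (b-1) ≤ bb (b+c+J) (b-1) := by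
  intro J
  induction J with
  | zero => intro _; simp
  | succ J ih => intro h; rw [← add_assoc]; exact (ih (by omega)).trans (bb_mono_n (by omega))

lemma tl_sum {b c : ℕ} (hb : 1 ≤ b) : ∀ J, c + J < b →
    J * (bb (b+c) (b-1) / 2) ≤ tl (b + c + J) b := by
  intro J
  induction J with
  | zero => intro _; simp [tl_nonneg]
  | succ J ih =>
    intro h
    have h1 := ih (by omega)
    have h2 := bb_mono_J (b := b) (c := c) J (by omega)
    obtain ⟨d, rfl⟩ : ∃ d, b = d + 1 := ⟨b-1, by omega⟩
    rw [← add_assoc, tl_succ]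
    push_cast
    simp only [Nat.add_sub_cancel] at *
    linarith

lemma bb_pred {b c : ℕ} (hb : 1 ≤ b) : bb (b+c) (b-1) * (c+1) = bb (b+c) c * b := by
  obtain ⟨d, rfl⟩ : ∃ d, b = d + 1 := ⟨b-1, by omega⟩
  simp only [Nat.add_sub_cancel]
  have h := Nat.choose_succ_right_eq (d+1+c) c
  have h2 : (d+1+c).choose d = (d+1+c).choose (c+1) := by
    rw [← Nat.choose_symm (n := d+1+c) (k := d) (by omega)]; congr 1; omega
  rw [show d + 1 + c - c = d + 1 by omega] at h
  unfold bb
  rw [h2, div_mul_eq_mul_div, div_mul_eq_mul_div]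
  congr 1
  exact_mod_cast h

lemma bb_o {b o c : ℕ} (ho : o ≤ 1) (hc : c ≤ b) : bb (b+o+c) c ≤ bb (b+c) c := by
  interval_cases o
  · simp
  · have h1 := Nat.choose_mul_succ_eq (b+c) c
    rw [show b + c + 1 - c = b + 1 by omega] at h1
    have h1' : (((b+c).choose c : ℕ):ℝ) * (b+c+1) = ((b+c+1).choose c : ℕ) * ((b:ℝ) + 1) := by
      exact_mod_cast h1
    unfold bb
    rw [show b+1+c = b+c+1 by ring, pow_succ, div_le_div_iff₀ (by positivity) (by positivity)]
    have hp : (0:ℝ) < 2^(b+c) := by positivity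
    have hc' : (c:ℝ) ≤ b := by exact_mod_cast hc
    have key : (((b+c+1).choose c : ℕ):ℝ) ≤ 2 * ((b+c).choose c : ℕ) := by
      have hb : (0:ℝ) < b + 1 := by positivity
      have hz : (0:ℝ) ≤ ((b+c).choose c : ℕ) := by positivity
      have : (((b+c+1).choose c : ℕ):ℝ) * (b+1) ≤ 2 * ((b+c).choose c : ℕ) * (b+1) := by nlinarith
      exact le_of_mul_le_mul_right this hb
    nlinarith

/-- the key numerical comparison -/
lemma key_num {a b o c : ℕ} (hab : a ≤ b) (hb : 1 ≤ b) (ho : o ≤ 1) :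
    ∃ e ≤ b, bb (a+b) a * bb (b+o+c) c ≤ 256 / b * (tl (a+e) a * tl (e+o+c) (e+o)) := by
  have hb0 : (0:ℝ) < b := by positivity
  have hsb : 0 < √(b:ℝ) := Real.sqrt_pos.2 hb0
  have hle : ∀ n k, b ≤ n → bb n k ≤ 1/√b := by
    intro n k hn
    rw [le_div_iff₀ hsb]
    refine le_trans ?_ (bb_le n k)
    have : √(b:ℝ) ≤ √n := Real.sqrt_le_sqrt (by exact_mod_cast hn)
    exact mul_le_mul_of_nonneg_left this (bb_nonneg _ _)
  have hss : √(b:ℝ) * √b = b := Real.mul_self_sqrt hb0.le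
  by_cases hcase : b ≤ c + JJ c
  · refine ⟨b, le_rfl, ?_⟩
    have h1 : 1/16 ≤ tl (a+b) a := by
      have := tl_const (e := a) (o := 0) (c := b) (by omega); simpa using this
    have h2 : 1/16 ≤ tl (b+o+c) (b+o) := tl_const (by omega)
    have h3 : (1/256:ℝ) ≤ tl (a+b) a * tl (b+o+c) (b+o) := by nlinarith
    calc _ ≤ (1/√b) * (1/√b) := by
          gcongr
          · exact bb_nonneg _ _
          · exact hle _ _ (by omega)
          · exact hle _ _ (by omega)
      _ = 1 / b := by rw [div_mul_div_comm, hss]; simp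
      _ = 256 / b * (1/256) := by field_simp
      _ ≤ _ := by gcongr
  · push Not at hcase
    refine ⟨c + JJ c, hcase.le, ?_⟩
    have h2 : 1/16 ≤ tl (c + JJ c+o+c) (c + JJ c+o) := tl_const (by omega)
    have h1 : tl (b + c + JJ c) b ≤ tl (a + (c+JJ c)) a := by
      have := tl_anti (c+JJ c) hab
      simp only [← add_assoc] at this ⊢; exact this
    have h3 := tl_sum hb (JJ c) hcase
    have h4 := bb_pred (c := c) hb
    have hx := bb_nonneg (b+c) c
    have hJ : √((c:ℝ)+1) ≤ 2 * JJ c := by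
      apply Real.sqrt_le_iff.2 ⟨by positivity, ?_⟩
      have h := Nat.lt_succ_sqrt c
      have h' : Nat.sqrt c + 1 ≤ 2 * JJ c := by unfold JJ; omega
      have : c + 1 ≤ (2 * JJ c)^2 := by
        calc c + 1 ≤ (Nat.sqrt c + 1)*(Nat.sqrt c + 1) := h
          _ ≤ _ := by rw [sq]; gcongr
      exact_mod_cast this
    have hcb : √((c:ℝ)+1) ≤ √b := Real.sqrt_le_sqrt (by
      have : c + 1 ≤ b := by omega
      exact_mod_cast this)
    have hc0 : 0 < √((c:ℝ)+1) := by positivity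
    have hcc : √((c:ℝ)+1) * √((c:ℝ)+1) = c+1 := Real.mul_self_sqrt (by positivity)
    have h5 : √b * bb (b+c) c ≤ 4 * tl (b+c+JJ c) b := by
      have e1 : bb (b+c) (b-1) = bb (b+c) c * b / (c+1) := by
        rw [eq_div_iff (by positivity)]; exact h4
      have e2 : √b ≤ 2 * JJ c * b / (c+1) := by
        rw [le_div_iff₀ (by positivity), ← hcc]
        calc √b * (√((c:ℝ)+1) * √((c:ℝ)+1)) ≤ √b * (2 * JJ c * √b) := by gcongr
          _ = 2 * JJ c * (√b * √b) := by ring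
          _ = _ := by rw [hss]
      calc √b * bb (b+c) c ≤ (2 * JJ c * b / (c+1)) * bb (b+c) c := by gcongr
        _ = 4 * (JJ c * (bb (b+c) (b-1) / 2)) := by rw [e1]; ring
        _ ≤ _ := by gcongr
    calc bb (a+b) a * bb (b+o+c) c ≤ (1/√b) * bb (b+c) c := by
          gcongr
          · exact bb_nonneg _ _
          · exact hle _ _ (by omega)
          · exact bb_o ho (by omega)
      _ = (√b * bb (b+c) c) / b := by
          rw [div_mul_eq_mul_div, div_eq_div_iff hsb.ne' hb0.ne']
          linear_combination (-bb (b+c) c) * hss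
      _ ≤ (4 * tl (a + (c+JJ c)) a) / b := by
          apply div_le_div_of_nonneg_right _ hb0.le; linarith
      _ = 64 / b * (tl (a + (c+JJ c)) a * (1/16)) := by ring
      _ ≤ 256 / b * (tl (a + (c+JJ c)) a * tl (c + JJ c+o+c) (c + JJ c+o)) := by
          gcongr
          · exact mul_nonneg (tl_nonneg _ _) (by norm_num)
          · norm_num
          · exact tl_nonneg _ _

lemma bb_double (n k : ℕ) : bb n k ≤ 2 * bb (n+1) k := by
  cases k with
  | zero => unfold bb; simp [pow_succ]
  | succ k => rw [bb_succ_succ]; linarith [bb_nonneg n k]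

/-- a step -/
def stp (b : Bool) : ℤ := if b then 1 else -1

/-- position of the walk -/
def pos (x0 : ℤ) (f : ℕ → Bool) : ℕ → ℤ
  | 0 => x0
  | t+1 => pos x0 f t + stp (f t)

/-- number of departures -/
def dep (x0 : ℤ) (f : ℕ → Bool) (t : ℕ) (z : ℤ) : ℕ :=
  ((Finset.range t).filter fun k => pos x0 f k = z).card

/-- number of visits at positive times -/
def vis (x0 : ℤ) (f : ℕ → Bool) (t : ℕ) (z : ℤ) : ℕ :=
  ((Finset.Icc 1 t).filter fun k => pos x0 f k = z).card

lemma pos_succ (x0 : ℤ) (f : ℕ → Bool) (t : ℕ) : pos x0 f (t+1) = pos x0 f t + stp (f t) := rfl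

lemma pos_zero (x0 : ℤ) (f : ℕ → Bool) : pos x0 f 0 = x0 := rfl

lemma dep_zero (x0 : ℤ) (f : ℕ → Bool) (z : ℤ) : dep x0 f 0 z = 0 := by simp [dep]
lemma vis_zero (x0 : ℤ) (f : ℕ → Bool) (z : ℤ) : vis x0 f 0 z = 0 := by simp [vis]

lemma dep_succ (x0 : ℤ) (f : ℕ → Bool) (t : ℕ) (z : ℤ) :
    dep x0 f (t+1) z = dep x0 f t z + if pos x0 f t = z then 1 else 0 := by
  unfold dep
  rw [Finset.range_add_one, Finset.filter_insert]
  split_ifs <;> simp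

lemma vis_succ (x0 : ℤ) (f : ℕ → Bool) (t : ℕ) (z : ℤ) :
    vis x0 f (t+1) z = vis x0 f t z + if pos x0 f (t+1) = z then 1 else 0 := by
  unfold vis
  rw [← Finset.insert_Icc_right_eq_Icc_add_one (by omega), Finset.filter_insert]
  split_ifs <;> simp

lemma vis_dep (x0 : ℤ) (f : ℕ → Bool) (t : ℕ) (z : ℤ) :
    vis x0 f t z + (if x0 = z then 1 else 0) = dep x0 f t z + if pos x0 f t = z then 1 else 0 := by
  induction t with
  | zero => rw [dep_zero, vis_zero, pos_zero]
  | succ t ih => rw [vis_succ, dep_succ]; omega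

lemma vis_mono (x0 : ℤ) (f : ℕ → Bool) (z : ℤ) : Monotone fun t => vis x0 f t z :=
  monotone_nat_of_le_succ fun t => by simp only [vis_succ]; omega

lemma dep_mono (x0 : ℤ) (f : ℕ → Bool) (z : ℤ) : Monotone fun t => dep x0 f t z :=
  monotone_nat_of_le_succ fun t => by simp only [dep_succ]; omega

/-- prefix dependence -/
lemma pos_congr {x0 : ℤ} {f g : ℕ → Bool} {t : ℕ} (h : ∀ i < t, f i = g i) :
    ∀ k ≤ t, pos x0 f k = pos x0 g k := by
  intro k
  induction k with
  | zero => intro _; rfl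
  | succ k ih => intro hk; rw [pos_succ, pos_succ, ih (by omega), h k (by omega)]

lemma vis_congr {x0 : ℤ} {f g : ℕ → Bool} {t : ℕ} (h : ∀ i < t, f i = g i) (z : ℤ) :
    ∀ k ≤ t, vis x0 f k z = vis x0 g k z := by
  intro k hk
  unfold vis
  congr 1
  apply Finset.filter_congr
  intro i hi
  rw [Finset.mem_Icc] at hi
  rw [pos_congr h i (by omega)]

lemma dep_congr {x0 : ℤ} {f g : ℕ → Bool} {t : ℕ} (h : ∀ i < t, f i = g i) (z : ℤ) :
    ∀ k ≤ t, dep x0 f k z = dep x0 g k z := by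
  intro k hk
  unfold dep
  congr 1
  apply Finset.filter_congr
  intro i hi
  rw [Finset.mem_range] at hi
  rw [pos_congr h i (by omega)]

/-- concatenation -/
def app (s : ℕ) (f g : ℕ → Bool) : ℕ → Bool := fun i => if i < s then f i else g (i - s)

lemma pos_app_le (s : ℕ) (f g : ℕ → Bool) (x0 : ℤ) : ∀ k ≤ s, pos x0 (app s f g) k = pos x0 f k :=
  pos_congr fun i hi => by simp [app, hi]

lemma vis_app_le (s : ℕ) (f g : ℕ → Bool) (x0 : ℤ) (z : ℤ) :
    ∀ k ≤ s, vis x0 (app s f g) k z = vis x0 f k z :=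
  vis_congr (fun i hi => by simp [app, hi]) z

lemma pos_app (s : ℕ) (f g : ℕ → Bool) (x0 : ℤ) (r : ℕ) :
    pos x0 (app s f g) (s + r) = pos (pos x0 f s) g r := by
  induction r with
  | zero => exact pos_app_le s f g x0 s le_rfl
  | succ r ih =>
    rw [← add_assoc, pos_succ, pos_succ, ih]
    simp [app]

lemma vis_app (s : ℕ) (f g : ℕ → Bool) (x0 : ℤ) (r : ℕ) (z : ℤ) :
    vis x0 (app s f g) (s + r) z = vis x0 f s z + vis (pos x0 f s) g r z := by
  induction r with
  | zero => rw [add_zero, vis_app_le s f g x0 z s le_rfl, vis_zero, add_zero]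
  | succ r ih =>
    rw [← add_assoc, vis_succ, vis_succ, ih, add_assoc s r 1, pos_app]; omega

/-- up arrows among the first `n` at `z` -/
def UU (w : ℤ × ℕ → Bool) (z : ℤ) (n : ℕ) : ℕ :=
  ((Finset.range n).filter fun i => w (z, i) = true).card
/-- down arrows among the first `n` at `z` -/
def VV (w : ℤ × ℕ → Bool) (z : ℤ) (n : ℕ) : ℕ :=
  ((Finset.range n).filter fun i => w (z, i) = false).card

lemma UU_zero (w : ℤ × ℕ → Bool) (z : ℤ) : UU w z 0 = 0 := by simp [UU]
lemma VV_zero (w : ℤ × ℕ → Bool) (z : ℤ) : VV w z 0 = 0 := by simp [VV]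

lemma UU_succ (w : ℤ × ℕ → Bool) (z : ℤ) (n : ℕ) :
    UU w z (n+1) = UU w z n + if w (z, n) = true then 1 else 0 := by
  unfold UU
  rw [Finset.range_add_one, Finset.filter_insert]
  split_ifs <;> simp

lemma VV_succ (w : ℤ × ℕ → Bool) (z : ℤ) (n : ℕ) :
    VV w z (n+1) = VV w z n + if w (z, n) = false then 1 else 0 := by
  unfold VV
  rw [Finset.range_add_one, Finset.filter_insert]
  split_ifs <;> simp

lemma UU_add_VV (w : ℤ × ℕ → Bool) (z : ℤ) (n : ℕ) : UU w z n + VV w z n = n := by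
  induction n with
  | zero => simp [UU_zero, VV_zero]
  | succ n ih => rw [UU_succ, VV_succ]; cases w (z, n) <;> simp <;> omega

lemma UU_mono (w : ℤ × ℕ → Bool) (z : ℤ) : Monotone (UU w z) :=
  monotone_nat_of_le_succ fun t => by simp only [UU_succ]; omega
lemma VV_mono (w : ℤ × ℕ → Bool) (z : ℤ) : Monotone (VV w z) :=
  monotone_nat_of_le_succ fun t => by simp only [VV_succ]; omega

/-- the step sequence `f` follows the arrow stacks `w` -/
def Follows (x0 : ℤ) (w : ℤ × ℕ → Bool) (f : ℕ → Bool) : Prop :=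
  ∀ t, f t = w (pos x0 f t, dep x0 f t (pos x0 f t))

/-- state of the stack walk -/
def stt (x0 : ℤ) (w : ℤ × ℕ → Bool) : ℕ → ℤ × (ℤ → ℕ)
  | 0 => (x0, fun _ => 0)
  | t+1 => ((stt x0 w t).1 + stp (w ((stt x0 w t).1, (stt x0 w t).2 (stt x0 w t).1)),
      fun z => (stt x0 w t).2 z + if (stt x0 w t).1 = z then 1 else 0)

/-- steps of the stack walk -/
def YY (x0 : ℤ) (t : ℕ) (w : ℤ × ℕ → Bool) : Bool :=
  w ((stt x0 w t).1, (stt x0 w t).2 (stt x0 w t).1)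

lemma stt_eq (x0 : ℤ) (w : ℤ × ℕ → Bool) (t : ℕ) :
    (stt x0 w t).1 = pos x0 (fun i => YY x0 i w) t ∧
    (stt x0 w t).2 = dep x0 (fun i => YY x0 i w) t := by
  induction t with
  | zero => exact ⟨rfl, by funext z; rw [dep_zero]; rfl⟩
  | succ t ih =>
    refine ⟨?_, ?_⟩
    · rw [pos_succ, ← ih.1]; rfl
    · funext z; rw [dep_succ, ← ih.1, ← ih.2]; rfl

lemma follows_YY (x0 : ℤ) (w : ℤ × ℕ → Bool) : Follows x0 w (fun i => YY x0 i w) := by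
  intro t
  show YY x0 t w = _
  rw [← (stt_eq x0 w t).1, ← (stt_eq x0 w t).2]; rfl

section follows
variable {x0 : ℤ} {w : ℤ × ℕ → Bool} {f : ℕ → Bool}

lemma UU_step (hf : Follows x0 w f) (t : ℕ) (z : ℤ) : UU w z (dep x0 f (t+1) z) =
    UU w z (dep x0 f t z) + if pos x0 f t = z ∧ f t = true then 1 else 0 := by
  rw [dep_succ]
  by_cases h : pos x0 f t = z
  · have := hf t
    rw [h] at this
    simp [h, UU_succ, this]
  · simp [h]

lemma VV_step (hf : Follows x0 w f) (t : ℕ) (z : ℤ) : VV w z (dep x0 f (t+1) z) =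
    VV w z (dep x0 f t z) + if pos x0 f t = z ∧ f t = false then 1 else 0 := by
  rw [dep_succ]
  by_cases h : pos x0 f t = z
  · have := hf t
    rw [h] at this
    simp [h, VV_succ, this]
  · simp [h]

lemma flow (hf : Follows x0 w f) (t : ℕ) (z : ℤ) : UU w z (dep x0 f t z) + (if pos x0 f t ≤ z then 1 else 0) =
    VV w (z+1) (dep x0 f t (z+1)) + if x0 ≤ z then 1 else 0 := by
  induction t with
  | zero => rw [dep_zero, dep_zero, UU_zero, VV_zero, pos_zero]
  | succ t ih =>
    rw [UU_step hf, VV_step hf, pos_succ]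
    cases hb : f t <;> simp [stp] <;> split_ifs at * <;> omega

lemma arrivals (hf : Follows x0 w f) (t : ℕ) (z : ℤ) : dep x0 f t z + (if pos x0 f t = z then 1 else 0) =
    UU w (z-1) (dep x0 f t (z-1)) + VV w (z+1) (dep x0 f t (z+1)) + if x0 = z then 1 else 0 := by
  have h1 := flow hf t z
  have h2 := flow hf t (z-1)
  rw [sub_add_cancel] at h2
  have h3 := UU_add_VV w z (dep x0 f t z)
  split_ifs at * <;> omega

/-- Domination lemma. -/
lemma dominate (hf : Follows x0 w f) (e : ℤ) (D : ℤ →₀ ℕ)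
    (hD : ∀ z, z ≠ e →
      (UU w (z-1) (D (z-1)) + VV w (z+1) (D (z+1)) + (if x0 = z then 1 else 0) ≤ D z) ∨
      (UU w (z-1) (D (z-1)) + (if z ≤ x0 then 1 else 0) ≤ VV w z (D z)) ∨
      (VV w (z+1) (D (z+1)) + (if x0 ≤ z then 1 else 0) ≤ UU w z (D z))) :
    ∃ t, pos x0 f t = e ∧ dep x0 f t e = D e ∧ ∀ z, dep x0 f t z ≤ D z := by
  by_contra hcon
  push Not at hcon
  have hall : ∀ t, ∀ z, dep x0 f t z ≤ D z := by
    intro t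
    induction t with
    | zero => intro z; simp [dep_zero]
    | succ t ih =>
      intro z
      rw [dep_succ]
      by_cases hz : pos x0 f t = z
      · rcases (ih z).lt_or_eq with hlt | heq
        · simp [hz]; omega
        · exfalso
          by_cases hze : z = e
          · subst hze
            obtain ⟨y, hy⟩ := hcon t hz heq
            exact absurd (ih y) (by omega)
          · have hU := UU_mono w (z-1) (ih (z-1))
            have hV := VV_mono w (z+1) (ih (z+1))
            have ha := arrivals hf t z
            have hf1 := flow hf t z
            have hf2 := flow hf t (z-1)
            rw [sub_add_cancel] at hf2
            rw [heq] at ha hf1 hf2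
            rcases hD z hze with h | h | h <;> split_ifs at * <;> omega
      · simp [hz]; exact ih z
  -- total number of departures
  have htot : ∀ t, ∑ z ∈ D.support, dep x0 f t z = t := by
    intro t
    induction t with
    | zero => simp [dep_zero]
    | succ t ih =>
      simp_rw [dep_succ]
      rw [Finset.sum_add_distrib, ih, Finset.sum_ite_eq]
      have : pos x0 f t ∈ D.support := by
        rw [Finsupp.mem_support_iff]
        have := hall (t+1) (pos x0 f t)
        rw [dep_succ] at this
        simp at this; omega
      simp [this]
  have h1 := htot (∑ z ∈ D.support, D z + 1)
  have h2 : ∑ z ∈ D.support, dep x0 f (∑ z ∈ D.support, D z + 1) z ≤ ∑ z ∈ D.support, D z :=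
    Finset.sum_le_sum fun z _ => hall _ z
  omega

lemma exists_time {t : ℕ} {z : ℤ} {j : ℕ} (h : j < dep x0 f t z) :
    ∃ k < t, pos x0 f k = z ∧ dep x0 f k z = j := by
  induction t with
  | zero => simp [dep_zero] at h
  | succ t ih =>
    rw [dep_succ] at h
    by_cases hj : j < dep x0 f t z
    · obtain ⟨k, hk, h'⟩ := ih hj; exact ⟨k, by omega, h'⟩
    · by_cases hz : pos x0 f t = z
      · refine ⟨t, by omega, hz, ?_⟩
        simp [hz] at h; omega
      · simp [hz] at h; omega

/-- the last arrow used at a site to the right of the endpoint points down -/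
lemma last_down (hf : Follows x0 w f) {t : ℕ} {z : ℤ} (hz : pos x0 f t < z) (hpos : 0 < dep x0 f t z) :
    UU w z (dep x0 f t z - 1) = UU w z (dep x0 f t z) := by
  obtain ⟨k, hk, hkz, hkd⟩ := exists_time (x0 := x0) (f := f) (t := t) (z := z)
    (j := dep x0 f t z - 1) (by omega)
  have h1 := flow hf t (z-1)
  have h2 := flow hf k (z-1)
  rw [sub_add_cancel] at h1 h2
  rw [hkd] at h2
  have hm := UU_mono w (z-1) (dep_mono x0 f (z-1) hk.le)
  have e1 := UU_add_VV w z (dep x0 f t z)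
  have e2 := UU_add_VV w z (dep x0 f t z - 1)
  have h3 := UU_mono w z (Nat.sub_le (dep x0 f t z) 1)
  simp only at hm
  split_ifs at * <;> omega

end follows

open MeasureTheory ProbabilityTheory
open scoped Classical ENNReal

/-- `E` depends only on the first `r` bits -/
def Pre (r : ℕ) (E : (ℕ → Bool) → Prop) : Prop :=
  ∀ f g : ℕ → Bool, (∀ i < r, f i = g i) → (E f ↔ E g)

/-- extension of a finite pattern -/
def exq {r : ℕ} (q : Fin r → Bool) : ℕ → Bool := fun i => if h : i < r then q ⟨i, h⟩ else false

/-- fair coin process -/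
structure Fair {Ω : Type*} [MeasurableSpace Ω] (P : Measure Ω) (Z : ℕ → Ω → Bool) : Prop where
  meas : ∀ i, Measurable (Z i)
  cyl : ∀ (n : ℕ) (q : ℕ → Bool), P {ω | ∀ i < n, Z i ω = q i} = (2⁻¹ : ℝ≥0∞) ^ n

section fair
variable {Ω : Type*} [MeasurableSpace Ω] {P : Measure Ω} {Z : ℕ → Ω → Bool}

lemma meas_cyl (hZ : ∀ i, Measurable (Z i)) (n : ℕ) (q : ℕ → Bool) :
    MeasurableSet {ω | ∀ i < n, Z i ω = q i} := by
  have : {ω | ∀ i < n, Z i ω = q i} = ⋂ i, ⋂ (_ : i < n), (Z i) ⁻¹' {q i} := by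
    ext ω; simp
  rw [this]
  exact MeasurableSet.iInter fun i => MeasurableSet.iInter fun _ => hZ i (MeasurableSet.singleton _)

lemma pre_union {s : ℕ} {E : (ℕ → Bool) → Prop} (hE : Pre s E) :
    {ω | E (fun i => Z i ω)} = ⋃ q ∈ (Finset.univ.filter fun q : Fin s → Bool => E (exq q)),
      {ω | ∀ i < s, Z i ω = exq q i} := by
  ext ω
  simp only [Set.mem_ofPred_eq, Finset.mem_filter, Finset.mem_univ, true_and, Set.mem_iUnion,
    exists_prop]
  constructor
  · intro h
    refine ⟨fun i => Z i ω, (hE _ _ ?_).1 h, ?_⟩ <;> intro i hi <;> simp [exq, hi]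
  · rintro ⟨q, hq, h⟩
    exact (hE _ _ h).2 hq

lemma meas_pre (hZ : ∀ i, Measurable (Z i)) {s : ℕ} {E : (ℕ → Bool) → Prop} (hE : Pre s E) :
    MeasurableSet {ω | E (fun i => Z i ω)} := by
  rw [pre_union hE]
  exact Finset.measurableSet_biUnion _ fun q _ => meas_cyl hZ _ _

lemma pre_split (hZ : ∀ i, Measurable (Z i)) {s : ℕ} {E : (ℕ → Bool) → Prop} (hE : Pre s E)
    {B : Set Ω} (hB : MeasurableSet B) :
    P ({ω | E (fun i => Z i ω)} ∩ B) =
      ∑ q ∈ (Finset.univ.filter fun q : Fin s → Bool => E (exq q)),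
        P ({ω | ∀ i < s, Z i ω = exq q i} ∩ B) := by
  rw [pre_union hE, Set.iUnion₂_inter, measure_biUnion_finset]
  · intro q _ q' _ hne
    refine Set.disjoint_left.2 fun ω h h' => hne ?_
    funext ⟨i, hi⟩
    have h1 := h.1 i hi
    have h2 := h'.1 i hi
    simp only [exq, hi, dif_pos] at h1 h2
    rw [← h1, ← h2]
  · exact fun q _ => (meas_cyl hZ _ _).inter hB

/-- probability of a prefix event -/
noncomputable def pr (r : ℕ) (E : (ℕ → Bool) → Prop) : ℝ≥0∞ :=
  ∑ q ∈ (Finset.univ.filter fun q : Fin r → Bool => E (exq q)), (2⁻¹ : ℝ≥0∞) ^ r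

lemma fair_pr (hZ : Fair P Z) {r : ℕ} {E : (ℕ → Bool) → Prop} (hE : Pre r E) :
    P {ω | E (fun i => Z i ω)} = pr r E := by
  have := pre_split (P := P) hZ.meas hE MeasurableSet.univ
  simp only [Set.inter_univ] at this
  rw [this]
  exact Finset.sum_congr rfl fun q _ => hZ.cyl _ _

lemma fair_trans (hZ : Fair P Z) (s : ℕ) (f : ℕ → Bool) {r : ℕ} {E : (ℕ → Bool) → Prop}
    (hE : Pre r E) :
    P ({ω | ∀ i < s, Z i ω = f i} ∩ {ω | E (fun i => Z (s + i) ω)}) =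
      (2⁻¹ : ℝ≥0∞) ^ s * pr r E := by
  have := pre_split (P := P) (Z := fun i => Z (s + i)) (fun i => hZ.meas _) hE
    (meas_cyl hZ.meas s f)
  rw [Set.inter_comm, this, pr, Finset.mul_sum]
  refine Finset.sum_congr rfl fun q _ => ?_
  rw [← pow_add, ← hZ.cyl (s + r) (app s f (exq q))]
  congr 1
  ext ω
  simp only [Set.mem_inter_iff, Set.mem_ofPred_eq, app]
  constructor
  · rintro ⟨h1, h2⟩ i hi
    by_cases h : i < s
    · simp [h, h2]
    · have := h1 (i - s) (by omega)
      rw [show s + (i - s) = i by omega] at this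
      simp [h, this]
  · intro h
    refine ⟨fun i hi => ?_, fun i hi => ?_⟩
    · have := h (s + i) (by omega)
      simpa using this
    · have := h i (by omega)
      simpa [hi] using this

/-- two extra prescribed bits cost a factor 4 -/
lemma fair_quarter (hZ : Fair P Z) {r : ℕ} {E : (ℕ → Bool) → Prop} (hE : Pre r E) :
    P {ω | E (fun i => Z i ω)} =
      4 * P ({ω | E (fun i => Z i ω)} ∩ {ω | Z r ω = true ∧ Z (r+1) ω = false}) := by
  have hm : MeasurableSet {ω | Z r ω = true ∧ Z (r+1) ω = false} :=
    (hZ.meas r (MeasurableSet.singleton true)).inter (hZ.meas (r+1) (MeasurableSet.singleton false))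
  rw [pre_split hZ.meas hE hm, fair_pr hZ hE, pr, Finset.mul_sum]
  refine Finset.sum_congr rfl fun q _ => ?_
  have : ({ω | ∀ i < r, Z i ω = exq q i} ∩ {ω | Z r ω = true ∧ Z (r+1) ω = false}) =
      {ω | ∀ i < r + 2, Z i ω = (fun i => if i < r then exq q i else decide (i = r)) i} := by
    ext ω
    simp only [Set.mem_inter_iff, Set.mem_ofPred_eq]
    constructor
    · rintro ⟨h1, h2, h3⟩ i hi
      rcases lt_trichotomy i r with h | h | h
      · simp [h, h1]
      · subst h; simp [h2]
      · obtain rfl : i = r + 1 := by omega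
        simp [h3]
    · intro h
      refine ⟨fun i hi => ?_, ?_, ?_⟩
      · have := h i (by omega); simpa [hi] using this
      · have := h r (by omega); simpa using this
      · have := h (r+1) (by omega); simpa using this
  rw [this, hZ.cyl, pow_add, mul_comm (_ ^ r), ← mul_assoc]
  have h4 : (4 : ℝ≥0∞) * 2⁻¹ ^ 2 = 1 := by
    rw [show (4 : ℝ≥0∞) = 2 ^ 2 by norm_num, ← mul_pow, ENNReal.mul_inv_cancel (by simp) (by simp)]
    simp
  rw [h4, one_mul]

end fair

/-! ### Stack measure -/

/-- fair coin -/
noncomputable def bm : Measure Bool := (2⁻¹ : ℝ≥0∞) • Measure.dirac true + (2⁻¹ : ℝ≥0∞) • Measure.dirac false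

lemma bm_singleton (b : Bool) : bm {b} = 2⁻¹ := by
  cases b <;> simp [bm]

instance bm_prob : IsProbabilityMeasure bm := ⟨by simp [bm, ENNReal.inv_two_add_inv_two]⟩

/-- i.i.d. arrows -/
noncomputable def nu : Measure (ℤ × ℕ → Bool) := Measure.infinitePi fun _ => bm

instance nu_prob : IsProbabilityMeasure nu := by unfold nu; infer_instance

lemma nu_cyl (s : Finset (ℤ × ℕ)) (p : ℤ × ℕ → Bool) :
    nu {w | ∀ i ∈ s, w i = p i} = (2⁻¹ : ℝ≥0∞) ^ s.card := by
  have : {w : ℤ × ℕ → Bool | ∀ i ∈ s, w i = p i} = Set.pi (s : Set (ℤ × ℕ)) fun i => {p i} := by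
    ext w; simp [Set.mem_pi]
  rw [this, nu, Measure.infinitePi_pi _ (fun i _ => MeasurableSet.singleton _)]
  simp [bm_singleton]

lemma meas_coord (i : ℤ × ℕ) (b : Bool) : MeasurableSet {w : ℤ × ℕ → Bool | w i = b} :=
  (measurable_pi_apply (X := fun _ : ℤ × ℕ => Bool) i) (MeasurableSet.singleton b)

lemma dep_lt {x0 : ℤ} {f : ℕ → Bool} {i j : ℕ} (h : i < j) :
    dep x0 f i (pos x0 f i) < dep x0 f j (pos x0 f i) := by
  have := dep_mono x0 f (pos x0 f i) (show i + 1 ≤ j from h)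
  simp only [dep_succ] at this
  simp at this; omega

lemma YY_prefix (x0 : ℤ) (n : ℕ) (q : ℕ → Bool) (w : ℤ × ℕ → Bool) :
    (∀ i < n, YY x0 i w = q i) ↔
      ∀ i < n, w (pos x0 q i, dep x0 q i (pos x0 q i)) = q i := by
  constructor
  · intro h i hi
    have h1 := follows_YY x0 w i
    simp only at h1
    rw [h i hi, pos_congr h i hi.le, dep_congr h _ i hi.le] at h1
    exact h1.symm
  · intro h i
    induction i using Nat.strong_induction_on with
    | _ i ih =>
      intro hi
      have h0 : ∀ k < i, YY x0 k w = q k := fun k hk => ih k hk (by omega)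
      have h1 := follows_YY x0 w i
      simp only at h1
      rw [h1, pos_congr h0 i le_rfl, dep_congr h0 _ i le_rfl]
      exact h i hi

lemma nu_YY_cyl (x0 : ℤ) (n : ℕ) (q : ℕ → Bool) :
    MeasurableSet {w | ∀ i < n, YY x0 i w = q i} ∧
    nu {w | ∀ i < n, YY x0 i w = q i} = (2⁻¹ : ℝ≥0∞) ^ n := by
  set c : ℕ → ℤ × ℕ := fun i => (pos x0 q i, dep x0 q i (pos x0 q i)) with hc
  have hinj : Function.Injective c := by
    intro i j hij
    simp only [hc, Prod.mk.injEq] at hij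
    by_contra hne
    rcases lt_or_gt_of_ne hne with h | h
    · have := dep_lt (x0 := x0) (f := q) h
      rw [hij.2, hij.1] at this; omega
    · have := dep_lt (x0 := x0) (f := q) h
      rw [← hij.2, ← hij.1] at this; omega
  have hset : {w | ∀ i < n, YY x0 i w = q i} =
      {w | ∀ i ∈ (Finset.range n).image c, w i = Function.extend c q (fun _ => false) i} := by
    ext w
    rw [Set.mem_ofPred_eq, YY_prefix]
    simp only [Finset.mem_image, Finset.mem_range, Set.mem_ofPred_eq, forall_exists_index, and_imp,
      forall_apply_eq_imp_iff₂, hinj.extend_apply]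
    rfl
  rw [hset]
  refine ⟨?_, ?_⟩
  · have : {w : ℤ × ℕ → Bool | ∀ i ∈ (Finset.range n).image c, w i = Function.extend c q (fun _ => false) i} =
      ⋂ i ∈ (Finset.range n).image c, {w | w i = Function.extend c q (fun _ => false) i} := by
      ext w; simp
    rw [this]
    exact Finset.measurableSet_biInter _ fun i _ => meas_coord _ _
  · rw [nu_cyl, Finset.card_image_of_injective _ hinj, Finset.card_range]

lemma fair_YY (x0 : ℤ) : Fair nu (YY x0) where
  meas i := by
    refine measurable_to_bool ?_
    have hs : (YY x0 i) ⁻¹' {true} = {w | (fun f : ℕ → Bool => f i = true) (fun k => YY x0 k w)} := rfl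
    rw [hs, pre_union (Z := YY x0) (s := i+1) (E := fun f => f i = true)
        (fun f g h => by simp only [h i (by omega)])]
    exact Finset.measurableSet_biUnion _ fun q _ => (nu_YY_cyl _ _ _).1
  cyl n q := (nu_YY_cyl x0 n q).2

/-! binomial laws -/

lemma UU_measSet (z : ℤ) (n : ℕ) (A : Finset ℕ) :
    nu {w | (Finset.range n).filter (fun i => w (z, i) = true) = A} =
      if A ⊆ Finset.range n then (2⁻¹ : ℝ≥0∞) ^ n else 0 := by
  split_ifs with h
  · have : {w : ℤ × ℕ → Bool | (Finset.range n).filter (fun i => w (z, i) = true) = A} =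
        {w | ∀ i ∈ (Finset.range n).image (fun i => (z, i)), w i = decide (i.2 ∈ A)} := by
      ext w
      simp only [Set.mem_ofPred_eq, Finset.mem_image, Finset.mem_range, forall_exists_index, and_imp,
        forall_apply_eq_imp_iff₂, Finset.ext_iff, Finset.mem_filter]
      constructor
      · intro hw i hi
        have := hw i
        rw [Bool.eq_iff_iff]
        simp [← this, hi]
      · intro hw i
        constructor
        · rintro ⟨hi, h1⟩
          have := hw i hi
          rw [h1] at this; simpa using this.symm
        · intro hi
          have hi' := Finset.mem_range.1 (h hi)
          refine ⟨hi', ?_⟩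
          rw [hw i hi']; simpa using hi
    rw [this, nu_cyl, Finset.card_image_of_injective _ (fun i j h => by simpa using h),
      Finset.card_range]
  · have : {w : ℤ × ℕ → Bool | (Finset.range n).filter (fun i => w (z, i) = true) = A} = ∅ := by
      ext w
      simp only [Set.mem_ofPred_eq, Set.mem_empty_iff_false, iff_false]
      rintro rfl
      exact h (Finset.filter_subset _ _)
    rw [this, measure_empty]

/-- sigma-algebra of a set of coordinates -/
def sg (R : Set (ℤ × ℕ)) : MeasurableSpace (ℤ × ℕ → Bool) :=
  ⨆ i ∈ R, MeasurableSpace.comap (fun w : ℤ × ℕ → Bool => w i) ⊤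

lemma sg_mono {R R' : Set (ℤ × ℕ)} (h : R ⊆ R') : sg R ≤ sg R' :=
  biSup_mono fun _ hi => h hi

lemma sg_le (R : Set (ℤ × ℕ)) : sg R ≤ (inferInstance : MeasurableSpace (ℤ × ℕ → Bool)) := by
  refine iSup₂_le fun i _ => ?_
  exact (measurable_pi_apply (X := fun _ : ℤ × ℕ => Bool) i).comap_le

lemma sg_coord {R : Set (ℤ × ℕ)} {i : ℤ × ℕ} (hi : i ∈ R) (b : Bool) :
    MeasurableSet[sg R] {w : ℤ × ℕ → Bool | w i = b} := by
  have : MeasurableSpace.comap (fun w : ℤ × ℕ → Bool => w i) ⊤ ≤ sg R :=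
    le_iSup₂ (f := fun i (_ : i ∈ R) => MeasurableSpace.comap (fun w : ℤ × ℕ → Bool => w i) ⊤) i hi
  exact this _ ⟨{b}, trivial, rfl⟩

lemma nu_indep {R R' : Set (ℤ × ℕ)} (h : Disjoint R R') {A B : Set (ℤ × ℕ → Bool)}
    (hA : MeasurableSet[sg R] A) (hB : MeasurableSet[sg R'] B) : nu (A ∩ B) = nu A * nu B := by
  have h1 : iIndepFun (fun (i : ℤ × ℕ) (w : ℤ × ℕ → Bool) => w i) nu := by
    have := iIndepFun_infinitePi (P := fun _ : ℤ × ℕ => bm) (X := fun _ => (id : Bool → Bool)) (fun _ => measurable_id)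
    exact this
  have h2 : iIndep (fun i : ℤ × ℕ => MeasurableSpace.comap (fun w : ℤ × ℕ → Bool => w i) ⊤) nu := h1
  have h3 := indep_iSup_of_disjoint
    (fun i => (measurable_pi_apply (X := fun _ : ℤ × ℕ => Bool) i).comap_le) h2 h
  exact Indep_iff _ _ _ |>.1 h3 A B hA hB

/-- A row function measurable -/
lemma sg_UU {R : Set (ℤ × ℕ)} {z : ℤ} (hz : ∀ i, (z, i) ∈ R) (n u : ℕ) :
    MeasurableSet[sg R] {w : ℤ × ℕ → Bool | UU w z n = u} := by
  induction n generalizing u with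
  | zero =>
    simp only [UU_zero]
    exact MeasurableSet.const _
  | succ n ih =>
    have : {w : ℤ × ℕ → Bool | UU w z (n+1) = u} =
        ({w | UU w z n = u} ∩ {w | w (z, n) = false}) ∪
        ({w | UU w z n + 1 = u} ∩ {w | w (z, n) = true}) := by
      ext w
      simp only [Set.mem_ofPred_eq, UU_succ, Set.mem_union, Set.mem_inter_iff]
      cases w (z, n) <;> simp
    rw [this]
    refine MeasurableSet.union (MeasurableSet.inter (ih u) (sg_coord (hz n) _))
      (MeasurableSet.inter ?_ (sg_coord (hz n) _))
    rcases u with _ | u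
    · convert MeasurableSet.empty using 1
      ext w; simp
    · convert ih u using 1
      ext w; simp

lemma sg_UU_set {R : Set (ℤ × ℕ)} {z : ℤ} (hz : ∀ i, (z, i) ∈ R) (n : ℕ) (p : ℕ → Prop) :
    MeasurableSet[sg R] {w : ℤ × ℕ → Bool | p (UU w z n)} := by
  have : {w : ℤ × ℕ → Bool | p (UU w z n)} = ⋃ u, ⋃ (_ : p u), {w | UU w z n = u} := by
    ext w; simp
  rw [this]
  exact MeasurableSet.iUnion fun u => MeasurableSet.iUnion fun _ => sg_UU hz n u

lemma VV_eq (w : ℤ × ℕ → Bool) (z : ℤ) (n : ℕ) : VV w z n = n - UU w z n := by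
  have := UU_add_VV w z n; omega

lemma UU_le (w : ℤ × ℕ → Bool) (z : ℤ) (n : ℕ) : UU w z n ≤ n := by
  have := UU_add_VV w z n; omega

lemma meas_UU (z : ℤ) (n : ℕ) (p : ℕ → Prop) :
    MeasurableSet {w : ℤ × ℕ → Bool | p (UU w z n)} :=
  sg_le Set.univ _ (sg_UU_set (R := Set.univ) (fun _ => trivial) n p)

lemma nu_UU (z : ℤ) (n u : ℕ) : nu {w | UU w z n = u} = ENNReal.ofReal (bb n u) := by
  have hu : {w : ℤ × ℕ → Bool | UU w z n = u} = ⋃ A ∈ Finset.powersetCard u (Finset.range n),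
      {w | (Finset.range n).filter (fun i => w (z, i) = true) = A} := by
    ext w
    simp [UU, Finset.mem_powersetCard]
  have hm : ∀ A : Finset ℕ, MeasurableSet
      {w : ℤ × ℕ → Bool | (Finset.range n).filter (fun i => w (z, i) = true) = A} := by
    intro A
    have : {w : ℤ × ℕ → Bool | (Finset.range n).filter (fun i => w (z, i) = true) = A} =
      {w | ∀ i, (i ∈ Finset.range n ∧ w (z, i) = true) ↔ i ∈ A} := by
      ext w; simp [Finset.ext_iff]
    rw [this]
    rw [Set.ofPred_forall]
    refine MeasurableSet.iInter fun i => ?_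
    have := meas_coord (z, i) true
    by_cases h1 : i ∈ Finset.range n <;> by_cases h2 : i ∈ A <;> simp only [h1, h2, true_and, false_and, iff_true, iff_false]
    · exact this
    · exact this.compl
    · exact MeasurableSet.const _
    · exact MeasurableSet.const _
  rw [hu, measure_biUnion_finset]
  · rw [Finset.sum_congr rfl (fun A hA => by
      rw [UU_measSet, if_pos (Finset.mem_powersetCard.1 hA).1])]
    rw [Finset.sum_const, Finset.card_powersetCard, Finset.card_range, bb, nsmul_eq_mul,
      ENNReal.ofReal_div_of_pos (by positivity), ENNReal.ofReal_natCast, ENNReal.div_eq_inv_mul,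
      ENNReal.ofReal_pow (by norm_num), mul_comm, ENNReal.inv_pow]
    simp
  · intro A _ B _ hne
    refine Set.disjoint_left.2 fun w h h' => hne ?_
    rw [Set.mem_ofPred_eq] at h h'
    rw [← h, ← h']
  · exact fun A _ => hm A

lemma nu_UU_ge (z : ℤ) (n k : ℕ) : nu {w | k ≤ UU w z n} = ENNReal.ofReal (tl n k) := by
  have : {w : ℤ × ℕ → Bool | k ≤ UU w z n} = ⋃ i ∈ Finset.Icc k n, {w | UU w z n = i} := by
    ext w
    have := UU_le w z n
    simp [this]
  rw [this, measure_biUnion_finset]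
  · rw [tl, ENNReal.ofReal_sum_of_nonneg (fun i _ => bb_nonneg _ _)]
    exact Finset.sum_congr rfl fun i _ => nu_UU z n i
  · intro A _ B _ hne
    refine Set.disjoint_left.2 fun w h h' => hne ?_
    rw [Set.mem_ofPred_eq] at h h'
    rw [← h, ← h']
  · exact fun i _ => meas_UU z n (fun u => u = i)

lemma nu_VV (z : ℤ) (n u : ℕ) : nu {w | VV w z n = u} = ENNReal.ofReal (bb n u) := by
  by_cases h : u ≤ n
  · have : {w : ℤ × ℕ → Bool | VV w z n = u} = {w | UU w z n = n - u} := by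
      ext w
      have := UU_add_VV w z n
      simp only [Set.mem_ofPred_eq]; omega
    rw [this, nu_UU, bb_symm h]
  · have : {w : ℤ × ℕ → Bool | VV w z n = u} = ∅ := by
      ext w
      have := UU_add_VV w z n
      simp only [Set.mem_ofPred_eq, Set.mem_empty_iff_false, iff_false]; omega
    rw [this, bb, Nat.choose_eq_zero_of_lt (by omega)]; simp

lemma nu_VV_ge (z : ℤ) (n k : ℕ) : nu {w | k ≤ VV w z n} = ENNReal.ofReal (tl n k) := by
  have : {w : ℤ × ℕ → Bool | k ≤ VV w z n} = ⋃ i ∈ Finset.Icc k n, {w | VV w z n = i} := by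
    ext w
    have := UU_add_VV w z n
    simp; omega
  rw [this, measure_biUnion_finset]
  · rw [tl, ENNReal.ofReal_sum_of_nonneg (fun i _ => bb_nonneg _ _)]
    exact Finset.sum_congr rfl fun i _ => nu_VV z n i
  · intro A _ B _ hne
    refine Set.disjoint_left.2 fun w h h' => hne ?_
    rw [Set.mem_ofPred_eq] at h h'
    rw [← h, ← h']
  · intro i _
    have := meas_UU z n (fun u => n - u = i)
    simp_rw [VV_eq]; exact this

/-- capacity in departures -/
def np (x0 : ℤ) (n : ℤ → ℕ) (z : ℤ) : ℕ := n z + if x0 = z then 1 else 0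

/-- three consecutive sites saturate simultaneously -/
def Tie (x0 : ℤ) (n : ℤ → ℕ) (x : ℤ) (r : ℕ) (f : ℕ → Bool) : Prop :=
  pos x0 f r = x ∧ vis x0 f r x = n x ∧ vis x0 f r (x+1) = n (x+1) ∧
    vis x0 f r (x+2) = n (x+2) ∧ ∀ z, vis x0 f r z ≤ n z

/-- the site `z` saturates first -/
def Win (x0 : ℤ) (n : ℤ → ℕ) (z : ℤ) (t : ℕ) (f : ℕ → Bool) : Prop :=
  pos x0 f t = z ∧ vis x0 f t z = n z ∧ ∀ y, vis x0 f t y ≤ n y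

/-- the left part can absorb `j` particles -/
def LeftE (x0 : ℤ) (n : ℤ → ℕ) (x : ℤ) (j : ℕ) (w : ℤ × ℕ → Bool) : Prop :=
  ∃ D : ℤ →₀ ℕ, (∀ z < x, D z ≤ np x0 n z) ∧
    UU w (x-2) (D (x-2)) + j + (if x0 = x-1 then 1 else 0) ≤ D (x-1) ∧
    ∀ z < x-1, UU w (z-1) (D (z-1)) + VV w (z+1) (D (z+1)) + (if x0 = z then 1 else 0) ≤ D z

/-- the right part can absorb `j` particles -/
def RightE (x0 : ℤ) (n : ℤ → ℕ) (y : ℤ) (j : ℕ) (w : ℤ × ℕ → Bool) : Prop :=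
  ∃ D : ℤ →₀ ℕ, (∀ z > y, D z ≤ np x0 n z) ∧
    VV w (y+2) (D (y+2)) + j + (if x0 = y+1 then 1 else 0) ≤ D (y+1) ∧
    ∀ z > y+1, UU w (z-1) (D (z-1)) + VV w (z+1) (D (z+1)) + (if x0 = z then 1 else 0) ≤ D z

lemma sg_two {R : Set (ℤ × ℕ)} {z z' : ℤ} (hz : ∀ i, (z, i) ∈ R) (hz' : ∀ i, (z', i) ∈ R)
    (k l : ℕ) (p : ℕ → ℕ → Prop) :
    MeasurableSet[sg R] {w : ℤ × ℕ → Bool | p (UU w z k) (UU w z' l)} := by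
  have : {w : ℤ × ℕ → Bool | p (UU w z k) (UU w z' l)} =
      ⋃ u, ({w | UU w z k = u} ∩ {w | p u (UU w z' l)}) := by
    ext w; simp
  rw [this]
  exact MeasurableSet.iUnion fun u => MeasurableSet.inter (sg_UU hz k u) (sg_UU_set hz' l (p u))

lemma sg_const (R : Set (ℤ × ℕ)) (p : Prop) : MeasurableSet[sg R] {_w : ℤ × ℕ → Bool | p} :=
  MeasurableSet.const _

lemma sg_forall {R : Set (ℤ × ℕ)} {p : ℤ → (ℤ × ℕ → Bool) → Prop} {c : ℤ → Prop}
    (h : ∀ z, c z → MeasurableSet[sg R] {w | p z w}) : MeasurableSet[sg R] {w | ∀ z, c z → p z w} := by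
  rw [Set.ofPred_forall]
  refine MeasurableSet.iInter fun z => ?_
  by_cases hc : c z
  · simpa [hc] using h z hc
  · simpa [hc] using sg_const R True

lemma sg_Left (x0 : ℤ) (n : ℤ → ℕ) (x : ℤ) (j : ℕ) :
    MeasurableSet[sg {p | p.1 < x}] {w | LeftE x0 n x j w} := by
  unfold LeftE
  rw [Set.ofPred_exists]
  refine MeasurableSet.iUnion fun D => ?_
  rw [Set.ofPred_and, Set.ofPred_and]
  refine MeasurableSet.inter (sg_const _ _) (MeasurableSet.inter ?_ ?_)
  · exact sg_UU_set (z := x - 2) (fun i => by simp) (D (x-2))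
      (fun u => u + j + (if x0 = x-1 then 1 else 0) ≤ D (x-1))
  · refine sg_forall fun z hz => ?_
    simp_rw [VV_eq]
    exact sg_two (z := z - 1) (z' := z + 1) (fun i => by simp; omega) (fun i => by simp; omega)
      (D (z-1)) (D (z+1)) (fun u v => u + (D (z+1) - v) + (if x0 = z then 1 else 0) ≤ D z)

lemma sg_Right (x0 : ℤ) (n : ℤ → ℕ) (y : ℤ) (j : ℕ) :
    MeasurableSet[sg {p | y < p.1}] {w | RightE x0 n y j w} := by
  unfold RightE
  rw [Set.ofPred_exists]
  refine MeasurableSet.iUnion fun D => ?_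
  rw [Set.ofPred_and, Set.ofPred_and]
  refine MeasurableSet.inter (sg_const _ _) (MeasurableSet.inter ?_ ?_)
  · simp_rw [VV_eq]
    exact sg_UU_set (z := y + 2) (fun i => by simp) (D (y+2))
      (fun u => D (y+2) - u + j + (if x0 = y+1 then 1 else 0) ≤ D (y+1))
  · refine sg_forall fun z hz => ?_
    simp_rw [VV_eq]
    exact sg_two (z := z - 1) (z' := z + 1) (fun i => by simp; omega) (fun i => by simp; omega)
      (D (z-1)) (D (z+1)) (fun u v => u + (D (z+1) - v) + (if x0 = z then 1 else 0) ≤ D z)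

lemma prod5 (x : ℤ) {AL A1 A2 A3 AR : Set (ℤ × ℕ → Bool)}
    (hL : MeasurableSet[sg {p | p.1 < x}] AL) (h1 : MeasurableSet[sg {p | p.1 = x}] A1)
    (h2 : MeasurableSet[sg {p | p.1 = x+1}] A2) (h3 : MeasurableSet[sg {p | p.1 = x+2}] A3)
    (hR : MeasurableSet[sg {p | x+2 < p.1}] AR) :
    nu (AL ∩ (A1 ∩ (A2 ∩ (A3 ∩ AR)))) = nu AL * (nu A1 * (nu A2 * (nu A3 * nu AR))) := by
  have m3 : MeasurableSet[sg {p | x+1 < p.1}] (A3 ∩ AR) :=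
    MeasurableSet.inter (sg_mono (fun p hp => by simp at *; omega) _ h3)
      (sg_mono (fun p hp => by simp at *; omega) _ hR)
  have m2 : MeasurableSet[sg {p | x < p.1}] (A2 ∩ (A3 ∩ AR)) :=
    MeasurableSet.inter (sg_mono (fun p hp => by simp at *; omega) _ h2)
      (sg_mono (fun p hp => by simp at *; omega) _ m3)
  have m1 : MeasurableSet[sg {p | x-1 < p.1}] (A1 ∩ (A2 ∩ (A3 ∩ AR))) :=
    MeasurableSet.inter (sg_mono (fun p hp => by simp at *; omega) _ h1)
      (sg_mono (fun p hp => by simp at *; omega) _ m2)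
  rw [nu_indep (Set.disjoint_left.2 fun p hp hp' => by simp at hp hp'; omega) hL m1,
    nu_indep (Set.disjoint_left.2 fun p hp hp' => by simp at hp hp'; omega) h1 m2,
    nu_indep (Set.disjoint_left.2 fun p hp hp' => by simp at hp hp'; omega) h2 m3,
    nu_indep (Set.disjoint_left.2 fun p hp hp' => by simp at hp hp'; omega) h3 hR]

/-- the set of stacks for which site `z` wins -/
def WS (x0 : ℤ) (n : ℤ → ℕ) (z : ℤ) : Set (ℤ × ℕ → Bool) :=
  {w | ∃ t, Win x0 n z t (fun i => YY x0 i w)}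

/-- combined configuration -/
noncomputable def comb (x : ℤ) (DL DR : ℤ →₀ ℕ) (d1 d2 d3 : ℕ) : ℤ →₀ ℕ :=
  Finsupp.ofSupportFinite
    (fun z => if z < x then DL z else if z = x then d1 else if z = x+1 then d2 else
      if z = x+2 then d3 else DR z)
    (by
      refine Set.Finite.subset (DL.support ∪ DR.support ∪ {x, x+1, x+2} : Finset ℤ).finite_toSet ?_
      intro z hz
      rw [Function.mem_support] at hz
      simp only [Finset.coe_union, Set.mem_union, Finset.mem_coe, Finsupp.mem_support_iff,
        Finset.mem_insert, Finset.mem_singleton]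
      split_ifs at hz <;> simp_all)

lemma comb_apply (x : ℤ) (DL DR : ℤ →₀ ℕ) (d1 d2 d3 : ℕ) (z : ℤ) :
    comb x DL DR d1 d2 d3 z = if z < x then DL z else if z = x then d1 else if z = x+1 then d2 else
      if z = x+2 then d3 else DR z := rfl

/-- general domination with left and right parts -/
lemma win_of (x0 : ℤ) (n : ℤ → ℕ) (x e : ℤ) (w : ℤ × ℕ → Bool) (d1 d2 d3 dl ur : ℕ)
    (he : e = x ∨ e = x + 2) (hn : 1 ≤ np x0 n e)
    (hL : LeftE x0 n x dl w) (hR : RightE x0 n (x+2) ur w)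
    (hdl : VV w x d1 ≤ dl) (hur : UU w (x+2) d3 ≤ ur)
    (h1 : d1 ≤ np x0 n x) (h2 : d2 ≤ np x0 n (x+1)) (h3 : d3 ≤ np x0 n (x+2))
    (hend : (if e = x then d1 else d3) + 1 = np x0 n e)
    (c1 : e = x ∨ VV w (x+1) d2 + (if x0 ≤ x then 1 else 0) ≤ UU w x d1)
    (c2 : UU w x d1 + (if x+1 ≤ x0 then 1 else 0) ≤ VV w (x+1) d2 ∨
      VV w (x+2) d3 + (if x0 ≤ x+1 then 1 else 0) ≤ UU w (x+1) d2)
    (c3 : e = x+2 ∨ UU w (x+1) d2 + (if x+2 ≤ x0 then 1 else 0) ≤ VV w (x+2) d3) :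
    w ∈ WS x0 n e := by
  obtain ⟨DL, hL1, hL2, hL3⟩ := hL
  obtain ⟨DR, hR1, hR2, hR3⟩ := hR
  have hf := follows_YY x0 w
  set D := comb x DL DR d1 d2 d3 with hD
  have vl : ∀ z < x, D z = DL z := fun z hz => by rw [hD, comb_apply, if_pos hz]
  have vr : ∀ z > x+2, D z = DR z := fun z hz => by
    rw [hD, comb_apply, if_neg (by omega), if_neg (by omega), if_neg (by omega), if_neg (by omega)]
  have v1 : D x = d1 := by rw [hD, comb_apply, if_neg (by omega), if_pos rfl]
  have v2 : D (x+1) = d2 := by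
    rw [hD, comb_apply, if_neg (by omega), if_neg (by omega), if_pos rfl]
  have v3 : D (x+2) = d3 := by
    rw [hD, comb_apply, if_neg (by omega), if_neg (by omega), if_neg (by omega), if_pos rfl]
  have hle : ∀ z, D z ≤ np x0 n z := by
    intro z
    by_cases a1 : z < x
    · rw [vl z a1]; exact hL1 z a1
    by_cases a2 : z > x+2
    · rw [vr z a2]; exact hR1 z a2
    have : z = x ∨ z = x+1 ∨ z = x+2 := by omega
    rcases this with rfl | rfl | rfl
    · rwa [v1]
    · rwa [v2]
    · rwa [v3]
  have hDe : D e + 1 = np x0 n e := by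
    rw [← hend]
    rcases he with rfl | rfl
    · simp [v1]
    · simp [v3]
  obtain ⟨t, ht1, ht2, ht3⟩ := dominate hf e D (by
    intro z hze
    by_cases a1 : z < x - 1
    · left
      rw [vl z (by omega), vl (z-1) (by omega), vl (z+1) (by omega)]
      exact hL3 z a1
    by_cases a2 : z > x+2+1
    · left
      rw [vr z (by omega), vr (z-1) (by omega), vr (z+1) (by omega)]
      exact hR3 z a2
    have : z = x - 1 ∨ z = x ∨ z = x+1 ∨ z = x+2 ∨ z = x+2+1 := by omega
    rcases this with rfl | rfl | rfl | rfl | rfl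
    · left
      rw [vl (x-1) (by omega), vl (x-1-1) (by omega), sub_add_cancel, v1, show x-1-1 = x-2 by ring]
      omega
    · right; right
      rw [v1, v2]
      exact c1.resolve_left (fun h => hze h.symm)
    · right
      rw [show x+1-1 = x by ring, show x+1+1 = x+2 by ring, v1, v2, v3]
      exact c2
    · right; left
      rw [show x+2-1 = x+1 by ring, v2, v3]
      exact c3.resolve_left (fun h => hze h.symm)
    · left
      rw [vr (x+2+1) (by omega), vr (x+2+1+1) (by omega), show x+2+1-1 = x+2 by ring, v3,
        show x+2+1+1 = x+2+2 by ring]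
      omega)
  have key : ∀ z, vis x0 (fun i => YY x0 i w) t z ≤ n z ∧ (z = e → vis x0 (fun i => YY x0 i w) t z = n z) := by
    intro z
    have hv := vis_dep x0 (fun i => YY x0 i w) t z
    have h5 := ht3 z
    have h6 := hle z
    unfold np at h6 hDe
    by_cases hze : z = e
    · subst hze
      rw [if_pos ht1] at hv
      omega
    · have hne : ¬ (pos x0 (fun i => YY x0 i w) t = z) := by rw [ht1]; exact fun h => hze h.symm
      rw [if_neg hne] at hv
      exact ⟨by omega, fun h => absurd h hze⟩
  exact ⟨t, ht1, (key e).2 rfl, fun y => (key y).1⟩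

lemma Pre_Tie (x0 : ℤ) (n : ℤ → ℕ) (x : ℤ) (r : ℕ) : Pre r (Tie x0 n x r) := by
  intro f g h
  unfold Tie
  have hp := pos_congr (x0 := x0) h r le_rfl
  have hv := fun z => vis_congr (x0 := x0) h z r le_rfl
  simp only [hp, hv]

lemma Pre_Win (x0 : ℤ) (n : ℤ → ℕ) (x : ℤ) (r : ℕ) : Pre r (Win x0 n x r) := by
  intro f g h
  unfold Win
  have hp := pos_congr (x0 := x0) h r le_rfl
  have hv := fun z => vis_congr (x0 := x0) h z r le_rfl
  simp only [hp, hv]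

lemma meas_WS (x0 : ℤ) (n : ℤ → ℕ) (z : ℤ) : MeasurableSet (WS x0 n z) := by
  unfold WS
  rw [Set.ofPred_exists]
  exact MeasurableSet.iUnion fun t => meas_pre (fair_YY x0).meas (Pre_Win x0 n z t)

/-- The consequence of a tie, in terms of the stacks. -/
lemma tie_imp (x0 : ℤ) (n : ℤ → ℕ) (x : ℤ) (r : ℕ) (w : ℤ × ℕ → Bool)
    (hn : 1 ≤ n (x+2)) (hn1 : 1 ≤ n x)
    (h : Tie x0 n x r (fun i => YY x0 i w)) (u1 : ℕ) (hu1 : u1 = UU w x (np x0 n x - 1)) :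
    LeftE x0 n x (np x0 n x - 1 - u1) w ∧
    VV w (x+1) (np x0 n (x+1)) = u1 + (if x+1 ≤ x0 then 1 else 0) ∧
    UU w (x+2) (np x0 n (x+2)) + UU w (x+1) (np x0 n (x+1)) + (if x+2 ≤ x0 then 1 else 0)
      = np x0 n (x+2) ∧
    UU w (x+2) (np x0 n (x+2) - 1) = UU w (x+2) (np x0 n (x+2)) ∧
    RightE x0 n (x+2) (UU w (x+2) (np x0 n (x+2))) w := by
  obtain ⟨hp, h1, h2, h3, hle⟩ := h
  have hf := follows_YY x0 w
  set f := fun i => YY x0 i w with hfdef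
  have hv := vis_dep x0 f r
  have d1 : dep x0 f r x = np x0 n x - 1 := by
    have := hv x; rw [h1, if_pos hp] at this; unfold np; omega
  have d2 : dep x0 f r (x+1) = np x0 n (x+1) := by
    have := hv (x+1)
    rw [h2, hp, if_neg (show ¬ (x = x+1) by omega)] at this; unfold np; omega
  have d3 : dep x0 f r (x+2) = np x0 n (x+2) := by
    have := hv (x+2)
    rw [h3, hp, if_neg (show ¬ (x = x+2) by omega)] at this; unfold np; omega
  have dl : ∀ z, dep x0 f r z ≤ np x0 n z := by
    intro z
    have := hv z
    have := hle z
    unfold np; omega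
  have f1 := flow hf r x
  have f2 := flow hf r (x+1)
  rw [show x+1+1 = x+2 by ring] at f2
  rw [hp, if_pos (by omega), d1, d2, ← hu1] at f1
  rw [hp, if_pos (by omega), d2, d3] at f2
  have e2 := UU_add_VV w (x+1) (np x0 n (x+1))
  have e3 := UU_add_VV w (x+2) (np x0 n (x+2))
  have e1 := UU_add_VV w x (np x0 n x - 1)
  rw [← hu1] at e1
  have hfin : (Function.support (dep x0 f r)).Finite := by
    refine Set.Finite.subset ((Finset.range r).image (pos x0 f)).finite_toSet fun z hz => ?_
    rw [Function.mem_support, dep, Finset.card_ne_zero] at hz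
    obtain ⟨k, hk⟩ := hz
    rw [Finset.mem_filter] at hk
    simp only [Finset.coe_image, Set.mem_image, Finset.mem_coe]
    exact ⟨k, hk⟩
  have hDv : ∀ z, Finsupp.ofSupportFinite (dep x0 f r) hfin z = dep x0 f r z := fun z => rfl
  have harr : ∀ z, z ≠ x → UU w (z-1) (dep x0 f r (z-1)) + VV w (z+1) (dep x0 f r (z+1)) +
      (if x0 = z then 1 else 0) = dep x0 f r z := by
    intro z hz
    have := arrivals hf r z
    rw [hp, if_neg (fun h => hz h.symm)] at this
    omega
  refine ⟨⟨Finsupp.ofSupportFinite (dep x0 f r) hfin, fun z _ => dl z, ?_, ?_⟩, ?_, ?_, ?_, 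
    ⟨Finsupp.ofSupportFinite (dep x0 f r) hfin, fun z _ => dl z, ?_, ?_⟩⟩
  · simp only [hDv]
    have := harr (x-1) (by omega)
    rw [sub_add_cancel, d1, show x-1-1 = x-2 by ring] at this
    omega
  · intro z hz
    simp only [hDv]
    exact (harr z (by omega)).le
  · split_ifs at * <;> omega
  · split_ifs at * <;> omega
  · have := last_down hf (t := r) (z := x+2) (by omega) (by rw [d3]; unfold np; omega)
    rw [d3] at this; exact this
  · simp only [hDv]
    have := harr (x+2+1) (by omega)
    rw [show x+2+1-1 = x+2 by ring, show x+2+1+1 = x+2+2 by ring, d3] at this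
    omega
  · intro z hz
    simp only [hDv]
    exact (harr z (by omega)).le

lemma key_enn {a b c o : ℕ} (hab : a ≤ b) (hb : 1 ≤ b) (ho : o ≤ 1) :
    ∃ e ≤ b, ENNReal.ofReal (bb (a+b) a) * ENNReal.ofReal (bb (b+o+c) c) ≤
      ENNReal.ofReal (256 / b) *
        (ENNReal.ofReal (tl (a+e) a) * ENNReal.ofReal (tl (e+o+c) (e+o))) := by
  obtain ⟨e, he, h⟩ := key_num (c := c) hab hb ho
  refine ⟨e, he, ?_⟩
  rw [← ENNReal.ofReal_mul (bb_nonneg _ _), ← ENNReal.ofReal_mul (tl_nonneg _ _),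
    ← ENNReal.ofReal_mul (by positivity)]
  exact ENNReal.ofReal_le_ofReal h

/-- view from the left -/
lemma view1 (x0 : ℤ) (n : ℤ → ℕ) (x : ℤ) (m : ℕ) (hm : 1 ≤ m) (hn : ∀ z, m ≤ n z)
    (u1 dl a u2 u3 o2 : ℕ) 
    (hdl : dl + u1 + 1 = np x0 n x)
    (ha : a = u1 + if x+1 ≤ x0 then 1 else 0)
    (ho : o2 = if x+2 ≤ x0 then 1 else 0)
    (h2 : np x0 n (x+1) = a + u2) (h3 : np x0 n (x+2) = u2 + o2 + u3) (hau : a ≤ u2) :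
    nu ({w | LeftE x0 n x dl w} ∩ ({w | UU w x (np x0 n x - 1) = u1} ∩
      ({w | VV w (x+1) (np x0 n (x+1)) = a} ∩
      ({w | UU w (x+2) (np x0 n (x+2)) = u3} ∩ {w | RightE x0 n (x+2) u3 w})))) ≤
    ENNReal.ofReal (512 / m) * nu ({w | UU w x (np x0 n x - 1) = u1} ∩ WS x0 n x) := by
  have hm2 : m ≤ a + u2 := by rw [← h2]; unfold np; have := hn (x+1); omega
  have ho1 : o2 ≤ 1 := by rw [ho]; split_ifs <;> omega
  obtain ⟨e, he, hk⟩ := key_enn (c := u3) hau (by omega) ho1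
  have mL := sg_Left x0 n x dl
  have mR := sg_Right x0 n (x+2) u3
  have m1 := sg_UU (R := {p | p.1 = x}) (z := x) (fun i => by simp) (np x0 n x - 1) u1
  have m2 : MeasurableSet[sg {p | p.1 = x+1}] {w | VV w (x+1) (np x0 n (x+1)) = a} := by
    simp_rw [VV_eq]
    exact sg_UU_set (R := {p | p.1 = x+1}) (z := x+1) (fun i => by simp) _ (fun u => np x0 n (x+1) - u = a)
  have m3 := sg_UU (R := {p | p.1 = x+2}) (z := x+2) (fun i => by simp) (np x0 n (x+2)) u3
  have b2 : MeasurableSet[sg {p | p.1 = x+1}] {w | a ≤ VV w (x+1) (a+e)} := by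
    simp_rw [VV_eq]
    exact sg_UU_set (R := {p | p.1 = x+1}) (z := x+1) (fun i => by simp) _ (fun u => a ≤ a + e - u)
  have b3 : MeasurableSet[sg {p | p.1 = x+2}] {w | e + o2 ≤ VV w (x+2) (e+o2+u3)} := by
    simp_rw [VV_eq]
    exact sg_UU_set (R := {p | p.1 = x+2}) (z := x+2) (fun i => by simp) _ (fun u => e+o2 ≤ e+o2+u3 - u)
  rw [prod5 x mL m1 m2 m3 mR, nu_VV (x+1), nu_UU (x+2), h2, h3]
  have hP := prod5 x mL m1 b2 b3 mR
  rw [nu_VV_ge, nu_VV_ge] at hP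
  have hsub : ({w | LeftE x0 n x dl w} ∩ ({w | UU w x (np x0 n x - 1) = u1} ∩
      ({w | a ≤ VV w (x+1) (a+e)} ∩
      ({w | e + o2 ≤ VV w (x+2) (e+o2+u3)} ∩ {w | RightE x0 n (x+2) u3 w})))) ⊆
      {w | UU w x (np x0 n x - 1) = u1} ∩ WS x0 n x := by
    rintro w ⟨wL, w1, w2, w3, wR⟩
    refine ⟨w1, ?_⟩
    simp only [Set.mem_ofPred_eq] at wL w1 w2 w3 wR
    have e1 := UU_add_VV w x (np x0 n x - 1)
    have e2 := UU_add_VV w (x+1) (a+e)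
    have e3 := UU_add_VV w (x+2) (e+o2+u3)
    refine win_of x0 n x x w (np x0 n x - 1) (a+e) (e+o2+u3) dl u3 (Or.inl rfl) (by omega)
      wL wR (by omega) (by omega) (by omega) (by omega) (by omega) (by rw [if_pos rfl]; omega)
      (Or.inl rfl) (Or.inl ?_) (Or.inr ?_)
    · rw [w1, ← ha]; exact w2
    · rw [← ho]; omega
  have hb : ENNReal.ofReal (256 / (u2:ℝ)) ≤ ENNReal.ofReal (512 / m) := by
    apply ENNReal.ofReal_le_ofReal
    have hm' : (0:ℝ) < m := by exact_mod_cast hm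
    have hu' : (0:ℝ) < u2 := by exact_mod_cast (show 0 < u2 by omega)
    have : (m:ℝ) ≤ 2 * u2 := by exact_mod_cast (show m ≤ 2 * u2 by omega)
    rw [div_le_div_iff₀ hu' hm']; linarith
  calc _ = nu {w | LeftE x0 n x dl w} * nu {w | UU w x (np x0 n x - 1) = u1} *
        nu {w | RightE x0 n (x+2) u3 w} *
        (ENNReal.ofReal (bb (a + u2) a) * ENNReal.ofReal (bb (u2 + o2 + u3) u3)) := by ring
    _ ≤ nu {w | LeftE x0 n x dl w} * nu {w | UU w x (np x0 n x - 1) = u1} *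
        nu {w | RightE x0 n (x+2) u3 w} * (ENNReal.ofReal (512 / m) *
        (ENNReal.ofReal (tl (a+e) a) * ENNReal.ofReal (tl (e+o2+u3) (e+o2)))) := by
      exact mul_le_mul_right (hk.trans (mul_le_mul_left hb _)) _
    _ = ENNReal.ofReal (512 / m) * (nu {w | LeftE x0 n x dl w} *
        (nu {w | UU w x (np x0 n x - 1) = u1} * (ENNReal.ofReal (tl (a+e) a) *
        (ENNReal.ofReal (tl (e+o2+u3) (e+o2)) * nu {w | RightE x0 n (x+2) u3 w})))) := by ring
    _ ≤ _ := by
      rw [← hP]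
      gcongr

/-- view from the right -/
lemma view3 (x0 : ℤ) (n : ℤ → ℕ) (x : ℤ) (m : ℕ) (hm : 1 ≤ m) (hn : ∀ z, m ≤ n z)
    (u1 dl a u2 u3 o1' : ℕ) 
    (hdl : dl + u1 + 1 = np x0 n x)
    (ho : o1' = if x0 ≤ x then 1 else 0)
    (ha : a + o1' = u1 + 1)
    (h2 : np x0 n (x+1) = a + u2)
    (h3 : np x0 n (x+2) = u2 + (if x+2 ≤ x0 then 1 else 0) + u3) (hau : u2 ≤ a) :
    nu ({w | LeftE x0 n x dl w} ∩ ({w | UU w x (np x0 n x - 1) = u1} ∩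
      ({w | UU w (x+1) (np x0 n (x+1)) = u2} ∩
      ({w | UU w (x+2) (np x0 n (x+2) - 1) = u3} ∩ {w | RightE x0 n (x+2) u3 w})))) ≤
    ENNReal.ofReal (1024 / m) * nu ({w | UU w (x+2) (np x0 n (x+2) - 1) = u3} ∩ WS x0 n (x+2)) := by
  have hm2 : m ≤ a + u2 := by rw [← h2]; unfold np; have := hn (x+1); omega
  have hn3 : 1 ≤ np x0 n (x+2) := by unfold np; have := hn (x+2); omega
  have ho1 : o1' ≤ 1 := by rw [ho]; split_ifs <;> omega
  obtain ⟨e, he, hk⟩ := key_enn (c := dl) hau (by omega) ho1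
  have mL := sg_Left x0 n x dl
  have mR := sg_Right x0 n (x+2) u3
  have m1 := sg_UU (R := {p | p.1 = x}) (z := x) (fun i => by simp) (np x0 n x - 1) u1
  have m2 := sg_UU (R := {p | p.1 = x+1}) (z := x+1) (fun i => by simp) (np x0 n (x+1)) u2
  have m3 := sg_UU (R := {p | p.1 = x+2}) (z := x+2) (fun i => by simp) (np x0 n (x+2) - 1) u3
  have b2 : MeasurableSet[sg {p | p.1 = x+1}] {w | u2 ≤ UU w (x+1) (u2+e)} := 
    sg_UU_set (R := {p | p.1 = x+1}) (z := x+1) (fun i => by simp) _ (fun u => u2 ≤ u)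
  have b1 : MeasurableSet[sg {p | p.1 = x}] {w | e + o1' ≤ UU w x (e+o1'+dl)} := 
    sg_UU_set (R := {p | p.1 = x}) (z := x) (fun i => by simp) _ (fun u => e+o1' ≤ u)
  rw [prod5 x mL m1 m2 m3 mR, nu_UU x, nu_UU (x+1)]
  have hP := prod5 x mL b1 b2 m3 mR
  rw [nu_UU_ge, nu_UU_ge] at hP
  have hsub : ({w | LeftE x0 n x dl w} ∩ ({w | e + o1' ≤ UU w x (e+o1'+dl)} ∩
      ({w | u2 ≤ UU w (x+1) (u2+e)} ∩
      ({w | UU w (x+2) (np x0 n (x+2) - 1) = u3} ∩ {w | RightE x0 n (x+2) u3 w})))) ⊆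
      {w | UU w (x+2) (np x0 n (x+2) - 1) = u3} ∩ WS x0 n (x+2) := by
    rintro w ⟨wL, w1, w2, w3, wR⟩
    refine ⟨w3, ?_⟩
    simp only [Set.mem_ofPred_eq] at wL w1 w2 w3 wR
    have e1 := UU_add_VV w x (e+o1'+dl)
    have e2 := UU_add_VV w (x+1) (u2+e)
    have e3 := UU_add_VV w (x+2) (np x0 n (x+2) - 1)
    refine win_of x0 n x (x+2) w (e+o1'+dl) (u2+e) (np x0 n (x+2) - 1) dl u3 (Or.inr rfl) (by omega)
      wL wR (by omega) (by omega) (by omega) (by omega) (by omega) (by rw [if_neg (by omega)]; omega)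
      (Or.inr ?_) (Or.inr ?_) (Or.inl rfl)
    · rw [← ho]; omega
    · split_ifs at * <;> omega
  have hb : ENNReal.ofReal (256 / (a:ℝ)) ≤ ENNReal.ofReal (512 / m) := by
    apply ENNReal.ofReal_le_ofReal
    have hm' : (0:ℝ) < m := by exact_mod_cast hm
    have hu' : (0:ℝ) < a := by exact_mod_cast (show 0 < a by omega)
    have : (m:ℝ) ≤ 2 * a := by exact_mod_cast (show m ≤ 2 * a by omega)
    rw [div_le_div_iff₀ hu' hm']; linarith
  have hb1 : ENNReal.ofReal (bb (np x0 n x - 1) u1) ≤ 2 * ENNReal.ofReal (bb (a + o1' + dl) dl) := by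
    have : bb (np x0 n x - 1) u1 = bb (np x0 n x - 1) dl := by
      rw [← bb_symm (show dl ≤ np x0 n x - 1 by omega)]
      congr 1; omega
    have h4 := bb_double (n := np x0 n x - 1) (k := dl)
    rw [show np x0 n x - 1 + 1 = a + o1' + dl by omega] at h4
    rw [this, show (2:ℝ≥0∞) = ENNReal.ofReal 2 by simp, ← ENNReal.ofReal_mul (by norm_num)]
    exact ENNReal.ofReal_le_ofReal h4
  have hb2 : bb (np x0 n (x+1)) u2 = bb (u2 + a) u2 := by rw [h2, add_comm]
  rw [hb2]
  have hm2 : (2:ℝ≥0∞) * ENNReal.ofReal (512 / m) = ENNReal.ofReal (1024 / m) := by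
    rw [show (2:ℝ≥0∞) = ENNReal.ofReal 2 by simp, ← ENNReal.ofReal_mul (by norm_num)]
    congr 1; ring
  calc _ = nu {w | LeftE x0 n x dl w} * nu {w | UU w (x+2) (np x0 n (x+2) - 1) = u3} *
        nu {w | RightE x0 n (x+2) u3 w} *
        (ENNReal.ofReal (bb (u2 + a) u2) * ENNReal.ofReal (bb (np x0 n x - 1) u1)) := by ring
    _ ≤ nu {w | LeftE x0 n x dl w} * nu {w | UU w (x+2) (np x0 n (x+2) - 1) = u3} *
        nu {w | RightE x0 n (x+2) u3 w} *
        (ENNReal.ofReal (bb (u2 + a) u2) * (2 * ENNReal.ofReal (bb (a + o1' + dl) dl))) := by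
      gcongr
    _ = nu {w | LeftE x0 n x dl w} * nu {w | UU w (x+2) (np x0 n (x+2) - 1) = u3} *
        nu {w | RightE x0 n (x+2) u3 w} * 2 *
        (ENNReal.ofReal (bb (u2 + a) u2) * ENNReal.ofReal (bb (a + o1' + dl) dl)) := by ring
    _ ≤ nu {w | LeftE x0 n x dl w} * nu {w | UU w (x+2) (np x0 n (x+2) - 1) = u3} *
        nu {w | RightE x0 n (x+2) u3 w} * 2 * (ENNReal.ofReal (512 / m) *
        (ENNReal.ofReal (tl (u2+e) u2) * ENNReal.ofReal (tl (e+o1'+dl) (e+o1')))) := by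
      exact mul_le_mul_right (hk.trans (mul_le_mul_left hb _)) _
    _ = 2 * ENNReal.ofReal (512 / m) * (nu {w | LeftE x0 n x dl w} *
        (ENNReal.ofReal (tl (e+o1'+dl) (e+o1')) * (ENNReal.ofReal (tl (u2+e) u2) *
        (nu {w | UU w (x+2) (np x0 n (x+2) - 1) = u3} * nu {w | RightE x0 n (x+2) u3 w})))) := by ring
    _ ≤ _ := by
      rw [← hP, hm2]
      gcongr

/-- tie versus win -/
lemma tie_le (x0 : ℤ) (n : ℤ → ℕ) (x : ℤ) (m : ℕ) (hm : 1 ≤ m) (hn : ∀ z, m ≤ n z) :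
    nu {w | ∃ r, Tie x0 n x r (fun i => YY x0 i w)} ≤
      ENNReal.ofReal (1024 / m) * (nu (WS x0 n x) + nu (WS x0 n (x+2))) := by
  set o1 : ℕ := if x+1 ≤ x0 then 1 else 0 with ho1
  set o2 : ℕ := if x+2 ≤ x0 then 1 else 0 with ho2
  set A : ℕ → Set (ℤ × ℕ → Bool) := fun u => {w | UU w x (np x0 n x - 1) = u} ∩ WS x0 n x with hA
  set B : ℕ → Set (ℤ × ℕ → Bool) := fun u => {w | UU w (x+2) (np x0 n (x+2) - 1) + np x0 n (x+1) + o2 = np x0 n (x+2) + u + o1} ∩ WS x0 n (x+2) with hB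
  set T := {w | ∃ r, Tie x0 n x r (fun i => YY x0 i w)} with hT
  have hnp : ∀ z, 1 ≤ np x0 n z := fun z => by unfold np; have := hn z; omega
  have hone : ∀ u ∈ Finset.range (np x0 n x), nu (T ∩ {w | UU w x (np x0 n x - 1) = u}) ≤
      ENNReal.ofReal (1024 / m) * (nu (A u) + nu (B u)) := by
    intro u hu
    rw [Finset.mem_range] at hu
    by_cases hne : (T ∩ {w | UU w x (np x0 n x - 1) = u}).Nonempty
    swap
    · rw [Set.not_nonempty_iff_eq_empty.1 hne, measure_empty]; exact zero_le
    obtain ⟨w0, ⟨r0, hr0⟩, hu0⟩ := hne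
    have hi0 := tie_imp x0 n x r0 w0 ((hm.trans (hn _))) (hm.trans (hn _)) hr0 u hu0.symm
    obtain ⟨-, i2, i3, -, -⟩ := hi0
    have e2 := UU_add_VV w0 (x+1) (np x0 n (x+1))
    rw [← ho1] at i2
    rw [← ho2] at i3
    obtain ⟨u2, hu2⟩ : ∃ u2, u2 = UU w0 (x+1) (np x0 n (x+1)) := ⟨_, rfl⟩
    obtain ⟨u3, hu3⟩ : ∃ u3, u3 = UU w0 (x+2) (np x0 n (x+2)) := ⟨_, rfl⟩
    rw [← hu2] at i3 e2
    rw [← hu3] at i3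
    rw [i2] at e2
    have hall : ∀ w ∈ T ∩ {w | UU w x (np x0 n x - 1) = u},
        LeftE x0 n x (np x0 n x - 1 - u) w ∧ UU w x (np x0 n x - 1) = u ∧
        VV w (x+1) (np x0 n (x+1)) = u + o1 ∧ UU w (x+1) (np x0 n (x+1)) = u2 ∧
        UU w (x+2) (np x0 n (x+2)) = u3 ∧ UU w (x+2) (np x0 n (x+2) - 1) = u3 ∧
        RightE x0 n (x+2) u3 w := by
      rintro w ⟨⟨r, hr⟩, hw⟩
      rw [Set.mem_ofPred_eq] at hw
      obtain ⟨j1, j2, j3, j4, j5⟩ := tie_imp x0 n x r w ((hm.trans (hn _))) (hm.trans (hn _)) hr u hw.symm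
      have e2' := UU_add_VV w (x+1) (np x0 n (x+1))
      rw [← ho1] at j2
      rw [← ho2] at j3
      have h3' : UU w (x+2) (np x0 n (x+2)) = u3 := by omega
      rw [h3'] at j4 j5
      exact ⟨j1, hw, j2, by omega, h3', j4, j5⟩
    rcases le_total (u + o1) u2 with hc | hc
    · have := view1 x0 n x m hm hn u (np x0 n x - 1 - u) (u + o1) u2 u3 o2 (by omega) rfl rfl
        (by omega) (by omega) hc
      calc _ ≤ _ := measure_mono fun w hw => by
            obtain ⟨j1, j2, j3, j4, j5, j6, j7⟩ := hall w hw
            exact ⟨j1, j2, j3, j5, j7⟩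
        _ ≤ _ := this
        _ ≤ _ := by
          have hle : ENNReal.ofReal (512 / m) ≤ ENNReal.ofReal (1024 / m) :=
            ENNReal.ofReal_le_ofReal (by gcongr; norm_num)
          gcongr
          exact le_self_add
    · have := view3 x0 n x m hm hn u (np x0 n x - 1 - u) (u + o1) u2 u3 (if x0 ≤ x then 1 else 0)
        (by omega) rfl (by rw [ho1]; split_ifs <;> omega) (by omega) (by omega) hc
      calc _ ≤ _ := measure_mono fun w hw => by
            obtain ⟨j1, j2, j3, j4, j5, j6, j7⟩ := hall w hw
            exact ⟨j1, j2, j4, j6, j7⟩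
        _ ≤ _ := this
        _ ≤ _ := by
          gcongr
          refine le_trans (measure_mono ?_) le_add_self
          rintro w ⟨hw1, hw2⟩
          refine ⟨?_, hw2⟩
          rw [Set.mem_ofPred_eq] at hw1 ⊢
          omega
  have hsumA : ∑ u ∈ Finset.range (np x0 n x), nu (A u) ≤ nu (WS x0 n x) := by
    rw [← measure_biUnion_finset]
    · exact measure_mono (Set.iUnion₂_subset fun u _ => Set.inter_subset_right)
    · intro u _ v _ huv
      refine Set.disjoint_left.2 fun w h h' => huv ?_
      have h1 := h.1; have h2 := h'.1
      rw [Set.mem_ofPred_eq] at h1 h2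
      rw [← h1, ← h2]
    · exact fun u _ => (meas_UU x _ (fun v => v = u)).inter (meas_WS _ _ _)
  have hsumB : ∑ u ∈ Finset.range (np x0 n x), nu (B u) ≤ nu (WS x0 n (x+2)) := by
    rw [← measure_biUnion_finset]
    · exact measure_mono (Set.iUnion₂_subset fun u _ => Set.inter_subset_right)
    · intro u _ v _ huv
      refine Set.disjoint_left.2 fun w h h' => huv ?_
      have h1 := h.1; have h2 := h'.1
      rw [Set.mem_ofPred_eq] at h1 h2
      omega
    · exact fun u _ => (meas_UU (x+2) _
        (fun v => v + np x0 n (x+1) + o2 = np x0 n (x+2) + u + o1)).inter (meas_WS _ _ _)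
  calc nu T ≤ nu (⋃ u ∈ Finset.range (np x0 n x), (T ∩ {w | UU w x (np x0 n x - 1) = u})) := by
        refine measure_mono fun w hw => ?_
        simp only [Set.mem_iUnion]
        refine ⟨UU w x (np x0 n x - 1), ?_, hw, rfl⟩
        have := UU_le w x (np x0 n x - 1)
        have := hnp x
        rw [Finset.mem_range]; omega
    _ ≤ ∑ u ∈ Finset.range (np x0 n x), nu (T ∩ {w | UU w x (np x0 n x - 1) = u}) :=
        measure_biUnion_finset_le _ _
    _ ≤ ∑ u ∈ Finset.range (np x0 n x), ENNReal.ofReal (1024 / m) * (nu (A u) + nu (B u)) :=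
        Finset.sum_le_sum hone
    _ = ENNReal.ofReal (1024 / m) * (∑ u ∈ Finset.range (np x0 n x), nu (A u) +
        ∑ u ∈ Finset.range (np x0 n x), nu (B u)) := by
        rw [← Finset.mul_sum, Finset.sum_add_distrib]
    _ ≤ _ := by gcongr

lemma vis_pos_succ (x0 : ℤ) (f : ℕ → Bool) {s t : ℕ} (h : s < t) :
    vis x0 f s (pos x0 f t) + 1 ≤ vis x0 f t (pos x0 f t) := by
  obtain ⟨k, rfl⟩ : ∃ k, t = k + 1 := ⟨t - 1, by omega⟩
  have := vis_mono x0 f (pos x0 f (k+1)) (show s ≤ k by omega)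
  simp only at this
  rw [vis_succ]; simp; omega

/-- Kraft-type inequality -/
lemma kraft (x0 : ℤ) (n : ℤ → ℕ) : ∑' z, nu (WS x0 n z) ≤ 4 := by
  have hY := fair_YY x0
  let E : ℕ → (ℕ → Bool) → Prop := fun t f => ∃ z, Win x0 n z t f
  have hE : ∀ t, Pre t (E t) := fun t f g h => exists_congr fun z => Pre_Win x0 n z t f g h
  let C : ℕ → Set (ℤ × ℕ → Bool) := fun t => {w | E t (fun i => YY x0 i w)} ∩
    {w | YY x0 t w = true ∧ YY x0 (t+1) w = false}
  have hC : ∀ t, MeasurableSet (C t) := fun t => (meas_pre hY.meas (hE t)).inter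
    ((hY.meas t (MeasurableSet.singleton true)).inter (hY.meas (t+1) (MeasurableSet.singleton false)))
  have key : ∀ t t' w, t < t' → w ∈ C t → w ∈ C t' → False := by
    rintro t t' w htt ⟨⟨z, h1, h2, h3⟩, ht, ht1⟩ ⟨⟨z', h1', h2', h3'⟩, ht', -⟩
    have hne : t' ≠ t + 1 := by rintro rfl; rw [ht1] at ht'; exact absurd ht' (by simp)
    have hp : pos x0 (fun i => YY x0 i w) (t+2) = z := by
      rw [show t + 2 = t + 1 + 1 by ring, pos_succ, pos_succ]
      simp only [ht, ht1, h1, stp]; simp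
    have h4 := vis_pos_succ x0 (fun i => YY x0 i w) (show t < t + 2 by omega)
    rw [hp] at h4
    have h5 := vis_mono x0 (fun i => YY x0 i w) z (show t + 2 ≤ t' by omega)
    simp only at h5
    have := h3' z
    omega
  have hdisj : Pairwise (Function.onFun Disjoint C) := by
    intro t t' hne
    refine Set.disjoint_left.2 fun w h h' => ?_
    rcases lt_or_gt_of_ne hne with hl | hl
    · exact key t t' w hl h h'
    · exact key t' t w hl h' h
  calc ∑' z, nu (WS x0 n z)
      ≤ ∑' z, ∑' t, nu {w | Win x0 n z t (fun i => YY x0 i w)} := by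
        refine ENNReal.tsum_le_tsum fun z => ?_
        unfold WS
        rw [Set.ofPred_exists]
        exact measure_iUnion_le _
    _ = ∑' t, ∑' z, nu {w | Win x0 n z t (fun i => YY x0 i w)} := ENNReal.tsum_comm
    _ = ∑' t, nu {w | E t (fun i => YY x0 i w)} := by
        refine tsum_congr fun t => ?_
        rw [← measure_iUnion]
        · congr 1; ext w; simp [E]
        · intro z z' hne
          refine Set.disjoint_left.2 fun w h h' => hne ?_
          exact h.1.symm.trans h'.1
        · exact fun z => meas_pre hY.meas (Pre_Win x0 n z t)
    _ = ∑' t, 4 * nu (C t) := tsum_congr fun t => fair_quarter hY (hE t)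
    _ = 4 * ∑' t, nu (C t) := ENNReal.tsum_mul_left
    _ = 4 * nu (⋃ t, C t) := by rw [measure_iUnion hdisj hC]
    _ ≤ 4 * 1 := by gcongr; exact prob_le_one
    _ = 4 := by norm_num

lemma level (x0 : ℤ) (n : ℤ → ℕ) (m : ℕ) (hm : 1 ≤ m) (hn : ∀ z, m ≤ n z) :
    ∑' x, ∑' r, nu {w | Tie x0 n x r (fun i => YY x0 i w)} ≤ ENNReal.ofReal (8192 / m) := by
  have hY := fair_YY x0
  calc _ = ∑' x, nu {w | ∃ r, Tie x0 n x r (fun i => YY x0 i w)} := by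
        refine tsum_congr fun x => ?_
        rw [← measure_iUnion]
        · congr 1; ext w; simp
        · have key : ∀ r r' w, r < r' → Tie x0 n x r (fun i => YY x0 i w) →
              Tie x0 n x r' (fun i => YY x0 i w) → False := by
            rintro r r' w hr h h'
            have := vis_pos_succ x0 (fun i => YY x0 i w) hr
            rw [h'.1, h.2.1, h'.2.1] at this; omega
          intro t t' hne
          refine Set.disjoint_left.2 fun w h h' => ?_
          rcases lt_or_gt_of_ne hne with hl | hl
          · exact key t t' w hl h h'
          · exact key t' t w hl h' h
        · exact fun r => meas_pre hY.meas (Pre_Tie x0 n x r)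
    _ ≤ ∑' x, ENNReal.ofReal (1024 / m) * (nu (WS x0 n x) + nu (WS x0 n (x+2))) :=
        ENNReal.tsum_le_tsum fun x => tie_le x0 n x m hm hn
    _ = ENNReal.ofReal (1024 / m) * (∑' x, nu (WS x0 n x) + ∑' x, nu (WS x0 n (x+2))) := by
        rw [ENNReal.tsum_mul_left, ENNReal.tsum_add]
    _ ≤ ENNReal.ofReal (1024 / m) * (4 + 4) := by
        gcongr
        · exact kraft x0 n
        · have := (Equiv.addRight (2:ℤ)).tsum_eq (fun x => nu (WS x0 n x))
          simp only [Equiv.coe_addRight] at this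
          rw [this]; exact kraft x0 n
    _ = _ := by
        rw [show (4:ℝ≥0∞) + 4 = ENNReal.ofReal 8 by norm_num, ← ENNReal.ofReal_mul (by positivity)]
        congr 1; ring

/-- three consecutive favourite sites, the endpoint being the lowest one, level at most `H` -/
def core (H t : ℕ) (f : ℕ → Bool) : Prop :=
  ∃ h ≤ H, ∀ z, vis 0 f t z ≤ h ∧
    (vis 0 f t z = h ↔ z = pos 0 f t ∨ z = pos 0 f t + 1 ∨ z = pos 0 f t + 2)

lemma cond_bound (H s : ℕ) (f0 : ℕ → Bool) (h0 : core H s f0) :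
    ∑' r : ℕ, nu {w | core H (s + (r+1)) (app s f0 (fun i => YY (pos 0 f0 s) i w))} ≤
      ∑ m ∈ Finset.Icc 1 H, ENNReal.ofReal (8192 / m) := by
  obtain ⟨h, hH, hz⟩ := h0
  set x0 := pos 0 f0 s with hx0
  set n : ℕ → ℤ → ℕ := fun m z => h + m - vis 0 f0 s z with hn
  have hsub : ∀ r : ℕ, {w | core H (s + (r+1)) (app s f0 (fun i => YY x0 i w))} ⊆
      ⋃ m ∈ Finset.Icc 1 H, ⋃ x, {w | Tie x0 (n m) x (r+1) (fun i => YY x0 i w)} := by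
    rintro r w ⟨h', hH', hz'⟩
    set g := fun i => YY x0 i w with hg
    simp only [vis_app, pos_app, ← hx0] at hz'
    set x' := pos x0 g (r+1) with hx'
    have hv1 := vis_pos_succ x0 g (show 0 < r + 1 by omega)
    rw [vis_zero, ← hx'] at hv1
    have a0 := (hz' x0).1
    have b0 := (hz x0).2.2 (Or.inl rfl)
    have hlt : h < h' := by
      rcases lt_or_ge h h' with hl | hl
      · exact hl
      exfalso
      have heq : h' = h := by omega
      subst heq
      have b1 := (hz (x0+1)).2.2 (Or.inr (Or.inl rfl))
      have b2 := (hz (x0+2)).2.2 (Or.inr (Or.inr rfl))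
      have a1 := (hz' (x0+1)).1
      have a2 := (hz' (x0+2)).1
      have c0 := (hz' x0).2.1 (by omega)
      have c1 := (hz' (x0+1)).2.1 (by omega)
      have c2 := (hz' (x0+2)).2.1 (by omega)
      have hxx : x' = x0 := by omega
      rw [hxx] at hv1
      omega
    simp only [Set.mem_iUnion, Finset.mem_Icc]
    refine ⟨h' - h, ⟨by omega, by omega⟩, x', ?_⟩
    have hnz : ∀ z, n (h' - h) z = h' - vis 0 f0 s z := fun z => by simp only [hn]; congr 1; omega
    refine ⟨rfl, ?_, ?_, ?_, fun z => ?_⟩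
    · have := (hz' x').2.2 (Or.inl rfl); rw [hnz]; show vis x0 g (r+1) x' = _; omega
    · have := (hz' (x'+1)).2.2 (Or.inr (Or.inl rfl)); rw [hnz]
      show vis x0 g (r+1) (x'+1) = _; omega
    · have := (hz' (x'+2)).2.2 (Or.inr (Or.inr rfl)); rw [hnz]
      show vis x0 g (r+1) (x'+2) = _; omega
    · have := (hz' z).1; rw [hnz]
      show vis x0 g (r+1) z ≤ _; omega
  calc _ ≤ ∑' r : ℕ, ∑ m ∈ Finset.Icc 1 H, ∑' x, nu {w | Tie x0 (n m) x (r+1) (fun i => YY x0 i w)} := by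
        refine ENNReal.tsum_le_tsum fun r => (measure_mono (hsub r)).trans ?_
        refine (measure_biUnion_finset_le _ _).trans (Finset.sum_le_sum fun m _ => ?_)
        exact measure_iUnion_le _
    _ = ∑ m ∈ Finset.Icc 1 H, ∑' r : ℕ, ∑' x, nu {w | Tie x0 (n m) x (r+1) (fun i => YY x0 i w)} :=
        Summable.tsum_finsetSum fun m _ => ENNReal.summable
    _ ≤ _ := by
        refine Finset.sum_le_sum fun m hm => ?_
        rw [Finset.mem_Icc] at hm
        rw [ENNReal.tsum_comm]
        refine le_trans ?_ (level x0 (n m) m hm.1 fun z => ?_)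
        · refine ENNReal.tsum_le_tsum fun x => ?_
          exact ENNReal.tsum_comp_le_tsum_of_injective (f := fun r => r + 1) (add_left_injective 1)
            (fun r => nu {w | Tie x0 (n m) x r (fun i => YY x0 i w)})
        · have := (hz z).1
          simp only [hn]; omega

lemma harm_bound (H : ℕ) : ∑ m ∈ Finset.Icc 1 H, ENNReal.ofReal (8192 / m) ≤
    ENNReal.ofReal (8192 * (1 + Real.log H)) := by
  rw [← ENNReal.ofReal_sum_of_nonneg (fun i _ => by positivity)]
  apply ENNReal.ofReal_le_ofReal
  have h := harmonic_le_one_add_log H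
  rw [harmonic_eq_sum_Icc] at h
  push_cast at h
  calc ∑ i ∈ Finset.Icc 1 H, (8192 / (i:ℝ)) = 8192 * ∑ i ∈ Finset.Icc 1 H, ((i:ℝ))⁻¹ := by
        rw [Finset.mul_sum]; rfl
    _ ≤ _ := by gcongr

lemma Pre_shift {Q : ℕ → (ℕ → Bool) → Prop} (hQ : ∀ t, Pre t (Q t)) (s r : ℕ) (f : ℕ → Bool) :
    Pre r (fun g => Q (s + r) (app s f g)) := by
  intro g g' h
  refine hQ (s + r) _ _ fun i hi => ?_
  unfold app
  split_ifs with his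
  · rfl
  · exact h _ (by omega)

/-- pair bound -/
lemma pair_bound {Ω : Type*} [MeasurableSpace Ω] {μ : Measure Ω} {X : ℕ → Ω → Bool}
    (hX : Fair μ X) (H : ℕ) (Q : ℕ → (ℕ → Bool) → Prop) (hQ : ∀ t, Pre t (Q t))
    (hc : ∀ t f, Q t f → core H t f) (s : ℕ) :
    ∑' r : ℕ, μ ({ω | Q s (fun i => X i ω)} ∩ {ω | Q (s + (r+1)) (fun i => X i ω)}) ≤
      ENNReal.ofReal (8192 * (1 + Real.log H)) * μ {ω | Q s (fun i => X i ω)} := by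
  have h1 : ∀ r : ℕ, μ ({ω | Q s (fun i => X i ω)} ∩ {ω | Q (s + (r+1)) (fun i => X i ω)}) =
      ∑ q ∈ (Finset.univ.filter fun q : Fin s → Bool => Q s (exq q)), (2⁻¹ : ℝ≥0∞) ^ s *
        nu {w | Q (s + (r+1)) (app s (exq q) (fun i => YY (pos 0 (exq q) s) i w))} := by
    intro r
    rw [pre_split hX.meas (hQ s) (meas_pre hX.meas (hQ _))]
    refine Finset.sum_congr rfl fun q _ => ?_
    have hP := Pre_shift hQ s (r+1) (exq q)
    have := fair_trans hX s (exq q) hP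
    rw [← fair_pr (fair_YY (pos 0 (exq q) s)) hP] at this
    rw [← this]
    congr 1
    ext ω
    simp only [Set.mem_inter_iff, Set.mem_ofPred_eq]
    refine and_congr_right fun hω => hQ _ _ _ fun i hi => ?_
    unfold app
    split_ifs with his
    · exact hω i his
    · show X i ω = X (s + (i - s)) ω
      rw [show s + (i - s) = i by omega]
  simp_rw [h1]
  rw [Summable.tsum_finsetSum fun m _ => ENNReal.summable, fair_pr hX (hQ s), pr, Finset.mul_sum]
  refine Finset.sum_le_sum fun q hq => ?_
  rw [Finset.mem_filter] at hq
  rw [ENNReal.tsum_mul_left, mul_comm]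
  refine mul_le_mul_left ?_ _
  refine le_trans (ENNReal.tsum_le_tsum fun r => measure_mono ?_)
    ((cond_bound H s (exq q) (hc _ _ hq.2)).trans (harm_bound H))
  intro w hw
  exact hc _ _ hw

lemma second_moment {Ω : Type*} [MeasurableSpace Ω] {μ : Measure Ω} {X : ℕ → Ω → Bool}
    (hX : Fair μ X) (H : ℕ) (Q : ℕ → (ℕ → Bool) → Prop) (hQ : ∀ t, Pre t (Q t))
    (hc : ∀ t f, Q t f → core H t f) :
    ∫⁻ ω, (∑' t, if Q t (fun i => X i ω) then (1 : ℝ≥0∞) else 0) ^ 2 ∂μ ≤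
      (2 * (1 + ENNReal.ofReal (8192 * (1 + Real.log H)))) *
        ∫⁻ ω, (∑' t, if Q t (fun i => X i ω) then (1 : ℝ≥0∞) else 0) ∂μ := by
  set S : ℕ → Set Ω := fun t => {ω | Q t (fun i => X i ω)} with hS
  have mS : ∀ t, MeasurableSet (S t) := fun t => meas_pre hX.meas (hQ t)
  have hind : ∀ t ω, (if Q t (fun i => X i ω) then (1 : ℝ≥0∞) else 0) = (S t).indicator 1 ω := by
    intro t ω
    simp only [Set.indicator, hS, Set.mem_ofPred_eq, Pi.one_apply]
  simp_rw [hind]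
  have hE1 : ∫⁻ ω, ∑' t, (S t).indicator (1 : Ω → ℝ≥0∞) ω ∂μ = ∑' t, μ (S t) := by
    rw [lintegral_tsum (fun t => (measurable_one.indicator (mS t)).aemeasurable)]
    exact tsum_congr fun t => lintegral_indicator_one (mS t)
  have hsq : ∀ ω, (∑' t, (S t).indicator (1 : Ω → ℝ≥0∞) ω) ^ 2 =
      ∑' s, ∑' t, (S s ∩ S t).indicator (1 : Ω → ℝ≥0∞) ω := by
    intro ω
    rw [sq, ← ENNReal.tsum_mul_right]
    refine tsum_congr fun s => ?_
    rw [← ENNReal.tsum_mul_left]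
    refine tsum_congr fun t => ?_
    rw [Set.inter_indicator_one]; rfl
  have hE2 : ∫⁻ ω, (∑' t, (S t).indicator (1 : Ω → ℝ≥0∞) ω) ^ 2 ∂μ = ∑' s, ∑' t, μ (S s ∩ S t) := by
    simp_rw [hsq]
    rw [lintegral_tsum]
    · refine tsum_congr fun s => ?_
      rw [lintegral_tsum (fun t => (measurable_one.indicator ((mS s).inter (mS t))).aemeasurable)]
      exact tsum_congr fun t => lintegral_indicator_one ((mS s).inter (mS t))
    · intro s
      exact (Measurable.ennreal_tsum fun t => measurable_one.indicator ((mS s).inter (mS t))).aemeasurable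
  rw [hE1, hE2]
  set a : ℕ → ℕ → ℝ≥0∞ := fun s t => if s ≤ t then μ (S s ∩ S t) else 0 with ha
  have h1 : ∑' s, ∑' t, μ (S s ∩ S t) ≤ 2 * ∑' s, ∑' t, a s t := by
    calc _ ≤ ∑' s, ∑' t, (a s t + a t s) := by
          refine ENNReal.tsum_le_tsum fun s => ENNReal.tsum_le_tsum fun t => ?_
          simp only [ha]
          rcases le_total s t with h | h
          · rw [if_pos h]; exact le_self_add
          · rw [if_pos h, Set.inter_comm]; exact le_add_self
      _ = ∑' s, ∑' t, a s t + ∑' s, ∑' t, a t s := by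
          simp_rw [ENNReal.tsum_add]
      _ = _ := by rw [ENNReal.tsum_comm (f := fun s t => a t s), two_mul]
  refine h1.trans ?_
  rw [mul_assoc]
  refine mul_le_mul_right ?_ _
  rw [← ENNReal.tsum_mul_left]
  refine ENNReal.tsum_le_tsum fun s => ?_
  have h2 : ∑' t, a s t = μ (S s) + ∑' r : ℕ, μ (S s ∩ S (s + (r+1))) := by
    have hsp := Summable.sum_add_tsum_nat_add' (f := a s) (k := s+1) ENNReal.summable
    rw [← hsp, Finset.sum_range_succ,
      Finset.sum_eq_zero, zero_add]
    · congr 1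
      · simp [ha]
      · refine tsum_congr fun r => ?_
        simp only [ha]
        rw [if_pos (by omega), show r + (s + 1) = s + (r + 1) by ring]
    · intro i hi
      rw [Finset.mem_range] at hi
      simp only [ha]
      rw [if_neg (by omega)]
  rw [h2, add_mul, one_mul]
  gcongr
  exact pair_bound hX H Q hQ hc s

/-- number of upcrossings -/
def up (f : ℕ → Bool) (t : ℕ) (x : ℤ) : ℕ :=
  ((Finset.Icc 1 t).filter fun k => pos 0 f k = x ∧ pos 0 f (k-1) = x - 1).card

/-- inverse upcrossing time -/
noncomputable def tu (f : ℕ → Bool) (k : ℕ) (x : ℤ) : ℕ := sInf {t : ℕ | 1 ≤ t ∧ up f t x = k}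

/-- favourite sites -/
def fav (f : ℕ → Bool) (t : ℕ) : Set ℤ := {y | ∀ z, vis 0 f t z ≤ vis 0 f t y}

lemma up_zero (f : ℕ → Bool) (x : ℤ) : up f 0 x = 0 := by simp [up]

lemma up_succ (f : ℕ → Bool) (t : ℕ) (x : ℤ) :
    up f (t+1) x = up f t x + if pos 0 f (t+1) = x ∧ pos 0 f t = x - 1 then 1 else 0 := by
  unfold up
  rw [← Finset.insert_Icc_right_eq_Icc_add_one (by omega), Finset.filter_insert]
  simp only [Nat.add_sub_cancel]
  split_ifs <;> simp

lemma up_mono (f : ℕ → Bool) (x : ℤ) : Monotone fun t => up f t x :=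
  monotone_nat_of_le_succ fun t => by simp only [up_succ]; omega

lemma tu_eq (f : ℕ → Bool) (t : ℕ) (x : ℤ) (h1 : pos 0 f (t+1) = x) (h2 : pos 0 f t = x - 1) :
    tu f (up f (t+1) x) x = t + 1 := by
  unfold tu
  apply le_antisymm
  · exact Nat.sInf_le ⟨by omega, rfl⟩
  · refine le_csInf ⟨t+1, by omega, rfl⟩ ?_
    rintro s ⟨hs, hs'⟩
    by_contra hlt
    have := up_mono f x (show s ≤ t by omega)
    simp only at this
    rw [up_succ, if_pos ⟨h1, h2⟩] at hs'
    omega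

lemma tu_spec (f : ℕ → Bool) (k : ℕ) (x : ℤ) (h : tu f (k+1) x ≠ 0) :
    ∃ t, tu f (k+1) x = t + 1 ∧ up f (t+1) x = k + 1 ∧ pos 0 f (t+1) = x ∧ pos 0 f t = x - 1 := by
  have hne : {t : ℕ | 1 ≤ t ∧ up f t x = k + 1}.Nonempty := by
    by_contra hc
    rw [Set.not_nonempty_iff_eq_empty] at hc
    apply h
    unfold tu
    rw [hc, Nat.sInf_empty]
  have hmem := Nat.sInf_mem hne
  obtain ⟨t, ht⟩ : ∃ t, tu f (k+1) x = t + 1 := ⟨tu f (k+1) x - 1, by omega⟩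
  change 1 ≤ tu f (k+1) x ∧ up f (tu f (k+1) x) x = k + 1 at hmem
  rw [ht] at hmem
  refine ⟨t, ht, hmem.2, ?_⟩
  by_contra hc
  have h1 := hmem.2
  rw [up_succ, if_neg hc] at h1
  have h2 : tu f (k+1) x ≤ t := by
    refine Nat.sInf_le ⟨?_, by omega⟩
    rcases Nat.eq_zero_or_pos t with rfl | h0
    · rw [up_zero] at h1; omega
    · exact h0
  omega

/-- the event at time `t` -/
def Qev (inI : ℕ → ℕ → Prop) (H : ℕ) (t : ℕ) (f : ℕ → Bool) : Prop :=
  1 ≤ t ∧ 1 ≤ pos 0 f t ∧ pos 0 f (t-1) = pos 0 f t - 1 ∧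
  (∀ y : ℤ, (∀ z : ℤ, vis 0 f t z ≤ vis 0 f t y) ↔
    (y = pos 0 f t ∨ y = pos 0 f t + 1 ∨ y = pos 0 f t + 2)) ∧
  1 ≤ vis 0 f t (pos 0 f t) ∧ vis 0 f t (pos 0 f t) ≤ H ∧
  inI (vis 0 f t (pos 0 f t)) (up f t (pos 0 f t) - 1)

lemma Pre_Qev (inI : ℕ → ℕ → Prop) (H t : ℕ) : Pre t (Qev inI H t) := by
  intro f g h
  have hp := pos_congr (x0 := 0) h
  have hv := fun z => vis_congr (x0 := 0) h z t le_rfl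
  have hu : ∀ x, up f t x = up g t x := by
    intro x
    unfold up
    congr 1
    apply Finset.filter_congr
    intro k hk
    rw [Finset.mem_Icc] at hk
    rw [hp k (by omega), hp (k-1) (by omega)]
  unfold Qev
  simp only [hp t le_rfl, hp (t-1) (by omega), hv, hu]

lemma core_Qev (inI : ℕ → ℕ → Prop) (H t : ℕ) (f : ℕ → Bool) (h : Qev inI H t f) : core H t f := by
  obtain ⟨-, -, -, hfav, -, hH, -⟩ := h
  have h0 := (hfav (pos 0 f t)).2 (Or.inl rfl)
  refine ⟨_, hH, fun z => ⟨h0 z, ?_⟩⟩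
  rw [← hfav z]
  constructor
  · intro hz y; rw [hz]; exact h0 y
  · intro hz; exact le_antisymm (h0 z) (hz _)

lemma count_eq (inI : ℕ → ℕ → Prop) (H : ℕ) (f : ℕ → Bool) :
    (∑' (h : ℕ) (k : ℕ) (x : ℕ), if 1 ≤ h ∧ h ≤ H ∧ 1 ≤ x ∧ inI h k ∧
      (fav f (tu f (k+1) (x:ℤ)) = {(x:ℤ), (x:ℤ)+1, (x:ℤ)+2} ∧
        vis 0 f (tu f (k+1) (x:ℤ)) x = h) then (1 : ℝ≥0∞) else 0) =
    ∑' t, if Qev inI H t f then (1 : ℝ≥0∞) else 0 := by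
  set F : ℕ × ℕ × ℕ → ℝ≥0∞ := fun p => if 1 ≤ p.1 ∧ p.1 ≤ H ∧ 1 ≤ p.2.2 ∧ inI p.1 p.2.1 ∧
      (fav f (tu f (p.2.1+1) (p.2.2:ℤ)) = {(p.2.2:ℤ), (p.2.2:ℤ)+1, (p.2.2:ℤ)+2} ∧
        vis 0 f (tu f (p.2.1+1) (p.2.2:ℤ)) p.2.2 = p.1) then (1 : ℝ≥0∞) else 0 with hF
  set G : ℕ → ℝ≥0∞ := fun t => if Qev inI H t f then (1 : ℝ≥0∞) else 0 with hG
  have hFs : (∑' (h : ℕ) (k : ℕ) (x : ℕ), F (h, k, x)) = ∑' p, F p := by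
    rw [ENNReal.tsum_prod']
    refine tsum_congr fun h => ?_
    rw [ENNReal.tsum_prod']
  change (∑' (h : ℕ) (k : ℕ) (x : ℕ), F (h, k, x)) = ∑' t, G t
  rw [hFs]
  have hGs : ∀ t : Function.support G, Qev inI H t f := by
    rintro ⟨t, ht⟩
    by_contra hc
    exact ht (if_neg hc)
  have hfavset : ∀ t (x : ℤ), fav f t = {x, x+1, x+2} ↔
      ∀ y : ℤ, (∀ z : ℤ, vis 0 f t z ≤ vis 0 f t y) ↔ (y = x ∨ y = x + 1 ∨ y = x + 2) := by
    intro t x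
    rw [Set.ext_iff]
    exact Iff.rfl
  -- the basic data for a time in Q
  have hdata : ∀ t, Qev inI H t f → ∃ s, t = s + 1 ∧ ((pos 0 f t).toNat : ℤ) = pos 0 f t ∧
      (up f t (pos 0 f t) - 1) + 1 = up f t (pos 0 f t) ∧
      tu f (up f t (pos 0 f t)) (pos 0 f t) = t := by
    intro t ht
    obtain ⟨h1, h2, h3, -⟩ := ht
    obtain ⟨s, rfl⟩ : ∃ s, t = s + 1 := ⟨t - 1, by omega⟩
    rw [Nat.add_sub_cancel] at h3
    refine ⟨s, rfl, by omega, ?_, tu_eq f s _ rfl h3⟩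
    rw [up_succ, if_pos ⟨rfl, h3⟩]; omega
  symm
  refine (tsum_eq_tsum_of_ne_zero_bij (f := F) (g := G)
    (fun t => (vis 0 f t (pos 0 f t), up f t (pos 0 f t) - 1, (pos 0 f t).toNat)) ?_ ?_ ?_).symm
  · intro t t' heq
    obtain ⟨s, -, a1, a2, a3⟩ := hdata _ (hGs t)
    obtain ⟨s', -, b1, b2, b3⟩ := hdata _ (hGs t')
    simp only [Prod.mk.injEq] at heq
    obtain ⟨-, e2, e3⟩ := heq
    have e4 : pos 0 f (t:ℕ) = pos 0 f (t':ℕ) := by rw [← a1, ← b1, e3]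
    have e5 : up f (t:ℕ) (pos 0 f t) = up f (t':ℕ) (pos 0 f t') := by rw [← a2, ← b2, e2]
    apply Subtype.ext
    rw [← a3, ← b3, e5, e4]
  · rintro ⟨h, k, x⟩ hp
    rw [Function.mem_support] at hp
    have hP : 1 ≤ h ∧ h ≤ H ∧ 1 ≤ x ∧ inI h k ∧
      (fav f (tu f (k+1) (x:ℤ)) = {(x:ℤ), (x:ℤ)+1, (x:ℤ)+2} ∧
        vis 0 f (tu f (k+1) (x:ℤ)) x = h) := by
      by_contra hc
      exact hp (if_neg hc)
    obtain ⟨p1, p2, p3, p4, p5, p6⟩ := hP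
    have htu : tu f (k+1) (x:ℤ) ≠ 0 := by
      intro h0
      rw [h0, vis_zero] at p6
      omega
    obtain ⟨t, t1, t2, t3, t4⟩ := tu_spec f k x htu
    rw [t1] at p5 p6
    have hQ : Qev inI H (t+1) f := by
      refine ⟨by omega, ?_, ?_, ?_, ?_⟩
      · rw [t3]; exact_mod_cast p3
      · rw [Nat.add_sub_cancel, t3, t4]
      · rw [t3]; exact (hfavset _ _).1 p5
      · rw [t3, p6, t2]; exact ⟨p1, p2, p4⟩
    refine ⟨⟨t+1, ?_⟩, ?_⟩
    · rw [Function.mem_support, hG]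
      simp only
      rw [if_pos hQ]; exact one_ne_zero
    · simp only
      rw [t3, p6, t2]; simp
  · intro t
    have hQ := hGs t
    obtain ⟨s, -, a1, a2, a3⟩ := hdata _ hQ
    obtain ⟨q1, q2, q3, q4, q5, q6, q7⟩ := hQ
    simp only [hF, hG]
    rw [if_pos (hGs t), if_pos]
    rw [a1, a2, a3]
    refine ⟨q5, q6, by omega, q7, (hfavset _ _).2 q4, rfl⟩

lemma fair_of_steps {Ω : Type*} [MeasurableSpace Ω] (μ : Measure Ω) [IsProbabilityMeasure μ]
    (ξ : ℕ → Ω → ℤ) (hξmeas : ∀ i, Measurable (ξ i))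
    (hξindep : iIndepFun ξ μ)
    (hξ1 : ∀ i, μ {ω | ξ i ω = 1} = 1 / 2) : Fair μ (fun i ω => decide (ξ i ω = 1)) := by
  have hm : Measurable (fun z : ℤ => decide (z = 1)) := measurable_of_countable _
  have hmX : ∀ i, Measurable (fun ω => decide (ξ i ω = 1)) := fun i => hm.comp (hξmeas i)
  refine ⟨hmX, fun n q => ?_⟩
  have hind : iIndepFun (fun i ω => decide (ξ i ω = 1)) μ :=
    hξindep.comp (fun _ z => decide (z = 1)) (fun _ => hm)
  have hset : {ω | ∀ i < n, decide (ξ i ω = 1) = q i} =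
      ⋂ i ∈ Finset.range n, (fun ω => decide (ξ i ω = 1)) ⁻¹' {q i} := by
    ext ω; simp
  have hone : ∀ i b, μ ((fun ω => decide (ξ i ω = 1)) ⁻¹' {b}) = 2⁻¹ := by
    intro i b
    have ht : (fun ω => decide (ξ i ω = 1)) ⁻¹' {true} = {ω | ξ i ω = 1} := by ext ω; simp
    have hmt : MeasurableSet {ω | ξ i ω = 1} := hξmeas i (MeasurableSet.singleton 1)
    cases b
    · have hf : (fun ω => decide (ξ i ω = 1)) ⁻¹' {false} = {ω | ξ i ω = 1}ᶜ := by ext ω; simp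
      rw [hf, prob_compl_eq_one_sub hmt, hξ1, one_div, ENNReal.one_sub_inv_two]
    · rw [ht, hξ1, one_div]
  rw [hset, hind.measure_inter_preimage_eq_mul (Finset.range n) (fun i _ => MeasurableSet.singleton _)]
  simp [hone]

lemma ae_steps {Ω : Type*} [MeasurableSpace Ω] (μ : Measure Ω) [IsProbabilityMeasure μ]
    (ξ : ℕ → Ω → ℤ) (hξmeas : ∀ i, Measurable (ξ i))
    (hξ1 : ∀ i, μ {ω | ξ i ω = 1} = 1 / 2) (hξ2 : ∀ i, μ {ω | ξ i ω = -1} = 1 / 2) :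
    ∀ᵐ ω ∂μ, ∀ i, ξ i ω = stp (decide (ξ i ω = 1)) := by
  rw [ae_all_iff]
  intro i
  have m1 : MeasurableSet {ω | ξ i ω = 1} := hξmeas i (MeasurableSet.singleton 1)
  have m2 : MeasurableSet {ω | ξ i ω = -1} := hξmeas i (MeasurableSet.singleton (-1))
  have hu : μ ({ω | ξ i ω = 1} ∪ {ω | ξ i ω = -1}) = 1 := by
    rw [measure_union _ m2, hξ1, hξ2, ENNReal.add_halves]
    refine Set.disjoint_left.2 fun ω h h' => ?_
    rw [Set.mem_ofPred_eq] at h h'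
    omega
  have := (prob_compl_eq_zero_iff (m1.union m2)).2 hu
  refine measure_mono_null (fun ω hω => ?_) this
  intro hc
  apply hω
  rcases hc with hc | hc
  · rw [Set.mem_ofPred_eq] at hc ⊢; simp [hc, stp]
  · rw [Set.mem_ofPred_eq] at hc ⊢; simp [hc, stp]

lemma final_const (H : ℕ) (hH : 2 ≤ H) :
    2 * (1 + ENNReal.ofReal (8192 * (1 + Real.log H))) ≤ ENNReal.ofReal (50000 * Real.log H) := by
  have h2 : (1:ℝ) ≤ 2 * Real.log H := by
    have h1 := Real.log_two_gt_d9
    have h3 : Real.log 2 ≤ Real.log H := Real.log_le_log (by norm_num) (by exact_mod_cast hH)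
    linarith
  rw [show (2:ℝ≥0∞) = ENNReal.ofReal 2 by simp, show (1:ℝ≥0∞) = ENNReal.ofReal 1 by simp,
    ← ENNReal.ofReal_add (by norm_num) (by linarith), ← ENNReal.ofReal_mul (by norm_num)]
  apply ENNReal.ofReal_le_ofReal
  linarith

end FS

open MeasureTheory ProbabilityTheory
open scoped Classical ENNReal

/-- There is a constant `C > 0` with `E[N_H²] ≤ C (log H) E[N_H]`
for all `H ≥ 2`. -/
theorem second_moment_upper_bound
    {Ω : Type*} [MeasurableSpace Ω] (μ : Measure Ω) [IsProbabilityMeasure μ]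
    -- i.i.d. steps, each uniform on {−1, 1}
    (ξ : ℕ → Ω → ℤ) (hξmeas : ∀ i, Measurable (ξ i))
    (hξindep : iIndepFun ξ μ)
    (hξ1 : ∀ i, μ {ω | ξ i ω = 1} = 1 / 2)
    (hξ2 : ∀ i, μ {ω | ξ i ω = -1} = 1 / 2)
    -- the simple random walk
    (S : ℕ → Ω → ℤ) (hS : ∀ t ω, S t ω = ∑ i ∈ Finset.range t, ξ i ω)
    -- local times
    (L : ℕ → ℤ → Ω → ℕ)
    (hL : ∀ t x ω, L t x ω = ((Finset.Icc 1 t).filter fun k => S k ω = x).card)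
    -- favorite (most visited) sites
    (Fav : ℕ → Ω → Set ℤ)
    (hFav : ∀ t ω, Fav t ω = {y : ℤ | ∀ z : ℤ, L t z ω ≤ L t y ω})
    -- upcrossing counts
    (U : ℕ → ℤ → Ω → ℕ)
    (hU : ∀ t x ω, U t x ω =
      ((Finset.Icc 1 t).filter fun k => S k ω = x ∧ S (k - 1) ω = x - 1).card)
    -- inverse upcrossing local times
    (TU : ℕ → ℤ → Ω → ℕ)
    (hTU : ∀ k x ω, TU k x ω = sInf {t : ℕ | 1 ≤ t ∧ U t x ω = k})
    -- the event of three consecutive favorite sites x, x+1, x+2, with local time h at x,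
    -- at the inverse upcrossing time T_U(k+1, x)
    (A : ℕ → ℕ → ℕ → Set Ω)
    (hA : ∀ x h k, A x h k = {ω |
      Fav (TU (k + 1) (x : ℤ) ω) ω = {(x : ℤ), (x : ℤ) + 1, (x : ℤ) + 2} ∧
      L (TU (k + 1) (x : ℤ) ω) (x : ℤ) ω = h})
    -- membership of k in the window I_h = ((h+√h)/2, (h+2√h)/2)
    (inI : ℕ → ℕ → Prop)
    (hinI : ∀ h k, inI h k ↔
      ((h : ℝ) + Real.sqrt h) / 2 < (k : ℝ) ∧ (k : ℝ) < ((h : ℝ) + 2 * Real.sqrt h) / 2)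
    -- the truncated count N_H of instances of three consecutive favorite sites
    (NH : ℕ → Ω → ℝ≥0∞)
    (hNH : ∀ H ω, NH H ω = ∑' (h : ℕ) (k : ℕ) (x : ℕ),
      if 1 ≤ h ∧ h ≤ H ∧ 1 ≤ x ∧ inI h k ∧ ω ∈ A x h k then (1 : ℝ≥0∞) else 0) :
    ∃ C : ℝ, 0 < C ∧ ∀ H : ℕ, 2 ≤ H →
      ∫⁻ ω, (NH H ω) ^ 2 ∂μ ≤ ENNReal.ofReal (C * Real.log H) * ∫⁻ ω, NH H ω ∂μ := by
  have hX := FS.fair_of_steps μ ξ hξmeas hξindep hξ1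
  have hae := FS.ae_steps μ ξ hξmeas hξ1 hξ2
  refine ⟨50000, by norm_num, fun H hH => ?_⟩
  have hN : ∀ᵐ ω ∂μ, NH H ω =
      ∑' t, if FS.Qev inI H t (fun i => decide (ξ i ω = 1)) then (1 : ℝ≥0∞) else 0 := by
    filter_upwards [hae] with ω hω
    set f : ℕ → Bool := fun i => decide (ξ i ω = 1) with hf
    have hSp : ∀ t, S t ω = FS.pos 0 f t := by
      intro t
      rw [hS]
      induction t with
      | zero => simp [FS.pos_zero]
      | succ t ih => rw [Finset.sum_range_succ, ih, FS.pos_succ, hω t]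
    have hLv : ∀ t x, L t x ω = FS.vis 0 f t x := by
      intro t x
      rw [hL]
      simp only [hSp]
      rfl
    have hUu : ∀ t x, U t x ω = FS.up f t x := by
      intro t x
      rw [hU]
      simp only [hSp]
      rfl
    have hTt : ∀ k x, TU k x ω = FS.tu f k x := by
      intro k x
      rw [hTU]
      simp only [hUu]
      rfl
    have hFf : ∀ t, Fav t ω = FS.fav f t := by
      intro t
      rw [hFav]
      simp only [hLv]
      rfl
    rw [← FS.count_eq inI H f, hNH]
    refine tsum_congr fun h => tsum_congr fun k => tsum_congr fun x => ?_
    refine if_congr ?_ rfl rfl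
    rw [hA, Set.mem_ofPred_eq, hFf, hLv, hTt]
  have h1 : ∫⁻ ω, NH H ω ^ 2 ∂μ = ∫⁻ ω, (∑' t, if FS.Qev inI H t (fun i => decide (ξ i ω = 1))
      then (1 : ℝ≥0∞) else 0) ^ 2 ∂μ :=
    lintegral_congr_ae (hN.mono fun ω hω => by simp only [hω])
  have h2 : ∫⁻ ω, NH H ω ∂μ = ∫⁻ ω, (∑' t, if FS.Qev inI H t (fun i => decide (ξ i ω = 1))
      then (1 : ℝ≥0∞) else 0) ∂μ :=
    lintegral_congr_ae hN
  rw [h1, h2]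
  refine (FS.second_moment hX H (FS.Qev inI H) (FS.Pre_Qev inI H) (FS.core_Qev inI H)).trans ?_
  exact mul_le_mul_left (FS.final_const H hH) _
end
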